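/- arXiv:2501.07090 — 2 statements merged into one kernel-verified Lean document; each statement's English description precedes it below -/
import Mathlib

section
/- There exists a convex pentagon that is an anisohedral tile: it admits a monohedral tiling of the plane, but it admits no monohedral tiling of the plane whose symmetry group acts transitively on the tiles (no isohedral tiling). -/
open EuclideanGeometry

noncomputable section

/-- The Euclidean plane. -/
abbrev Plane : Type := EuclideanSpace ℝ (Fin 2)

/-- A convex polygon with `n` vertices: `n` points of the plane in strictly convex
position, labeled in cyclic order (each segment joining cyclically consecutive
vertices lies on the boundary of the convex hull). -/
structure ConvexPolygon (n : ℕ) [NeZero n] where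
  V : Fin n → Plane
  strictlyConvex : ∀ i : Fin n, V i ∉ convexHull ℝ (V '' {j | j ≠ i})
  cyclic : ∀ i : Fin n, segment ℝ (V i) (V (i + 1)) ⊆ frontier (convexHull ℝ (Set.range V))

namespace ConvexPolygon

variable {n : ℕ} [NeZero n]

/-- The polygon, as a subset of the plane (the convex hull of its vertices). -/
def carrier (P : ConvexPolygon n) : Set Plane := convexHull ℝ (Set.range P.V)

/-- The interior angle (in radians) at the `i`-th vertex. -/
def angle (P : ConvexPolygon n) (i : Fin n) : ℝ :=
  EuclideanGeometry.angle (P.V (i - 1)) (P.V i) (P.V (i + 1))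

/-- The length of the side joining the `i`-th vertex to the next one. -/
def side (P : ConvexPolygon n) (i : Fin n) : ℝ := dist (P.V i) (P.V (i + 1))

end ConvexPolygon

/-- A convex pentagon.  Its angles `A, B, C, D, E` are `angle 0, …, angle 4` and
its sides `a, b, c, d, e` are `side 0, …, side 4`. -/
abbrev ConvexPentagon := ConvexPolygon 5

/-- `t` is an isometric copy of `P`. -/
def IsIsometricCopy (t P : Set Plane) : Prop :=
  ∃ g : Plane ≃ᵢ Plane, t = g '' P

/-- `T` is a monohedral tiling of the plane by isometric copies of `P`:
the tiles cover the plane and have pairwise disjoint interiors. -/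
def IsMonohedralTiling (P : Set Plane) (T : Set (Set Plane)) : Prop :=
  (∀ t ∈ T, IsIsometricCopy t P) ∧ ⋃₀ T = Set.univ ∧
    T.Pairwise fun t s => interior t ∩ interior s = ∅

/-- `x` is a vertex (extreme point) of the convex polygonal tile `t`. -/
def IsVertexOf (x : Plane) (t : Set Plane) : Prop := x ∈ Set.extremePoints ℝ t

/-- `e` is an edge (a full side) of the convex polygonal tile `t`: a segment
joining two distinct vertices of `t` that lies on the boundary of `t`. -/
def IsEdgeOf (e t : Set Plane) : Prop :=
  ∃ x y : Plane, x ≠ y ∧ IsVertexOf x t ∧ IsVertexOf y t ∧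
    e = segment ℝ x y ∧ e ⊆ frontier t

/-- A tiling by convex polygons is edge-to-edge if any two distinct tiles meet in
the empty set, a common vertex, or a common edge. -/
def IsEdgeToEdge (T : Set (Set Plane)) : Prop :=
  ∀ t ∈ T, ∀ s ∈ T, t ≠ s →
    t ∩ s = ∅ ∨
    (∃ x : Plane, t ∩ s = {x} ∧ IsVertexOf x t ∧ IsVertexOf x s) ∨
    (∃ e : Set Plane, t ∩ s = e ∧ IsEdgeOf e t ∧ IsEdgeOf e s)

/-- A tiling is periodic if translations by two linearly independent vectors map
every tile onto a tile. -/
def IsPeriodic (T : Set (Set Plane)) : Prop :=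
  ∃ u v : Plane, LinearIndependent ℝ ![u, v] ∧
    (∀ t ∈ T, (fun x => x + u) '' t ∈ T) ∧ (∀ t ∈ T, (fun x => x + v) '' t ∈ T)

/-- An isometry is a symmetry of the tiling `T` if it maps the tiles of `T` onto
the tiles of `T`. -/
def IsSymmetryOf (g : Plane ≃ᵢ Plane) (T : Set (Set Plane)) : Prop :=
  (fun t => g '' t) '' T = T

/-- A tiling is isohedral if its symmetry group acts transitively on the tiles. -/
def IsIsohedral (T : Set (Set Plane)) : Prop :=
  ∀ t ∈ T, ∀ s ∈ T, ∃ g : Plane ≃ᵢ Plane, IsSymmetryOf g T ∧ g '' t = s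

/-- Two tiles are equivalent if some symmetry of the tiling maps one onto the other. -/
def SymEquiv (T : Set (Set Plane)) (t s : Set Plane) : Prop :=
  ∃ g : Plane ≃ᵢ Plane, IsSymmetryOf g T ∧ g '' t = s

/-- A direct (orientation-preserving) isometry of the plane: an affine isometry
whose linear part has positive determinant. -/
def IsDirectIsometry (g : Plane ≃ᵢ Plane) : Prop :=
  ∃ (L : Plane ≃ₗᵢ[ℝ] Plane) (w : Plane),
    0 < LinearMap.det (L.toLinearEquiv : Plane →ₗ[ℝ] Plane) ∧ ∀ x, g x = L x + w

/-- Relabeling of the vertices of a pentagon: a cyclic shift by `k`, with the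
orientation reversed when `r = true`. -/
def relabel (k : Fin 5) (r : Bool) (i : Fin 5) : Fin 5 := if r then k - i else k + i



/-! ## Coordinates and the pentagon -/

/-- The point with first coordinate `x` and second coordinate `y * √3`. -/
def pt (x y : ℝ) : Plane := !₂[x, y * √3]

/-- First (rational) coordinate. -/
def cX (z : Plane) : ℝ := z 0

/-- Second (rational) coordinate, in units of `√3`. -/
def cY (z : Plane) : ℝ := z 1 / √3

lemma s3_pos : (0 : ℝ) < √3 := Real.sqrt_pos.2 (by norm_num)

lemma s3_ne : (√3 : ℝ) ≠ 0 := s3_pos.ne'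

lemma s3_sq : (√3 : ℝ) * √3 = 3 := Real.mul_self_sqrt (by norm_num)

@[simp] lemma cX_pt (x y : ℝ) : cX (pt x y) = x := by simp [cX, pt]

@[simp] lemma cY_pt (x y : ℝ) : cY (pt x y) = y := by
  simp [cY, pt]

lemma pt_co (z : Plane) : pt (cX z) (cY z) = z := by
  ext i
  fin_cases i <;> simp [pt, cX, cY]

lemma ext_co {z w : Plane} (h0 : cX z = cX w) (h1 : cY z = cY w) : z = w := by
  rw [← pt_co z, ← pt_co w, h0, h1]

lemma cX_cont : Continuous cX := by unfold cX; fun_prop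

lemma cY_cont : Continuous cY := by unfold cY; fun_prop

lemma cX_comb (a b : ℝ) (z w : Plane) : cX (a • z + b • w) = a * cX z + b * cX w := by
  simp [cX]

lemma cY_comb (a b : ℝ) (z w : Plane) : cY (a • z + b • w) = a * cY z + b * cY w := by
  simp [cY]; ring

lemma dist_sq_co (z w : Plane) :
    dist z w ^ 2 = (cX z - cX w) ^ 2 + 3 * (cY z - cY w) ^ 2 := by
  rw [EuclideanSpace.dist_eq, Real.sq_sqrt (by positivity)]
  simp only [Fin.sum_univ_two, Real.dist_eq, sq_abs, cX, cY]
  rw [← sub_div, div_pow, Real.sq_sqrt (by norm_num)]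
  ring

/-- An affine function in the rational coordinates. -/
def lf (a b c : ℝ) (z : Plane) : ℝ := a * cX z + b * cY z + c

lemma lf_cont (a b c : ℝ) : Continuous (lf a b c) := by
  unfold lf
  have := cX_cont
  have := cY_cont
  fun_prop

lemma lf_comb (a b c s t : ℝ) (hst : s + t = 1) (z w : Plane) :
    lf a b c (s • z + t • w) = s * lf a b c z + t * lf a b c w := by
  simp only [lf, cX_comb, cY_comb]
  linear_combination (-c) * hst

lemma convex_lf (a b c : ℝ) : Convex ℝ {z | 0 ≤ lf a b c z} := by
  intro z hz w hw s t hs ht hst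
  simp only [Set.mem_ofPred_eq] at *
  rw [lf_comb _ _ _ _ _ hst]
  positivity

lemma convex_lf_pos (a b c : ℝ) : Convex ℝ {z | 0 < lf a b c z} := by
  intro z hz w hw s t hs ht hst
  simp only [Set.mem_ofPred_eq] at *
  rw [lf_comb _ _ _ _ _ hst]
  rcases hs.eq_or_lt with rfl | hs
  · have : t = 1 := by linarith
    subst this; simpa using hw
  · have := mul_pos hs hz
    have := mul_nonneg ht hw.le
    linarith

/-- A point in the interior of a closed half-plane satisfies the strict inequality. -/
lemma lf_pos_of_interior {a b c : ℝ} (hab : a ≠ 0 ∨ b ≠ 0) {S : Set Plane}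
    (hS : ∀ z ∈ S, 0 ≤ lf a b c z) {z : Plane} (hz : z ∈ interior S) : 0 < lf a b c z := by
  have hN : 0 < a ^ 2 + b ^ 2 := by
    rcases hab with h | h <;> positivity
  have hcont : Continuous fun s : ℝ => pt (cX z - s * a) (cY z - s * b) := by
    unfold pt
    fun_prop
  have h0 : (fun s : ℝ => pt (cX z - s * a) (cY z - s * b)) 0 = z := by
    simp [pt_co]
  have hev : ∀ᶠ s : ℝ in nhds 0, pt (cX z - s * a) (cY z - s * b) ∈ S := by
    have := hcont.continuousAt (x := 0)
    unfold ContinuousAt at this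
    rw [h0] at this
    exact this (mem_interior_iff_mem_nhds.1 hz)
  obtain ⟨ε, hε, hball⟩ := Metric.eventually_nhds_iff.1 hev
  have h1 := hS _ (hball (y := ε / 2) (by
    rw [Real.dist_eq, sub_zero, abs_of_pos (by linarith)]; linarith))
  simp only [lf, cX_pt, cY_pt] at h1 ⊢
  nlinarith [mul_pos (half_pos hε) hN]

/-- The coefficients of the five sides. -/
def cA : Fin 5 → ℝ := ![1, -1, -3, 1, 1]
def cB : Fin 5 → ℝ := ![5, 2, -1, -5, -1]
def cC : Fin 5 → ℝ := ![0, 7, 28, 12, 0]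

/-- The affine function that vanishes on the `i`-th side. -/
def sd (i : Fin 5) : Plane → ℝ := lf (cA i) (cB i) (cC i)

/-- The vertices. -/
def vx : Fin 5 → ℝ := ![0, 5, 9, 8, 3]
def vy : Fin 5 → ℝ := ![0, -1, 1, 4, 3]
def vt (i : Fin 5) : Plane := pt (vx i) (vy i)

/-- The membership predicate in rational coordinates. -/
def InP (x y : ℝ) : Prop :=
  0 ≤ x + 5 * y ∧ 0 ≤ 7 - x + 2 * y ∧ 0 ≤ 28 - 3 * x - y ∧ 0 ≤ 12 + x - 5 * y ∧ 0 ≤ x - y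

/-- The strict membership predicate in rational coordinates. -/
def InPs (x y : ℝ) : Prop :=
  0 < x + 5 * y ∧ 0 < 7 - x + 2 * y ∧ 0 < 28 - 3 * x - y ∧ 0 < 12 + x - 5 * y ∧ 0 < x - y

/-- The pentagon as an intersection of half-planes. -/
def PP : Set Plane := {z | ∀ i, 0 ≤ sd i z}

lemma forall5 {p : Fin 5 → Prop} : (∀ i, p i) ↔ p 0 ∧ p 1 ∧ p 2 ∧ p 3 ∧ p 4 :=
  ⟨fun h => ⟨h 0, h 1, h 2, h 3, h 4⟩, fun ⟨h0, h1, h2, h3, h4⟩ i => by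
    fin_cases i <;> assumption⟩

lemma sd0 (z : Plane) : sd 0 z = cX z + 5 * cY z := by simp [sd, lf, cA, cB, cC]

lemma sd1 (z : Plane) : sd 1 z = 7 - cX z + 2 * cY z := by simp [sd, lf, cA, cB, cC]; ring

lemma sd2 (z : Plane) : sd 2 z = 28 - 3 * cX z - cY z := by simp [sd, lf, cA, cB, cC]; ring

lemma sd3 (z : Plane) : sd 3 z = 12 + cX z - 5 * cY z := by simp [sd, lf, cA, cB, cC]; ring

lemma sd4 (z : Plane) : sd 4 z = cX z - cY z := by simp [sd, lf, cA, cB, cC]; ring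

lemma mem_PP_iff (z : Plane) : z ∈ PP ↔ InP (cX z) (cY z) := by
  simp only [PP, Set.mem_ofPred_eq, forall5, sd0, sd1, sd2, sd3, sd4, InP]

lemma sd_pos_iff (z : Plane) : (∀ i, 0 < sd i z) ↔ InPs (cX z) (cY z) := by
  simp only [forall5, sd0, sd1, sd2, sd3, sd4, InPs]

lemma cAB_ne (i : Fin 5) : cA i ≠ 0 ∨ cB i ≠ 0 := by
  left; fin_cases i <;> simp [cA]

lemma interior_PP {z : Plane} (hz : z ∈ interior PP) (i : Fin 5) : 0 < sd i z :=
  lf_pos_of_interior (cAB_ne i) (fun w (hw : w ∈ {z | ∀ i, 0 ≤ sd i z}) => by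
    rw [Set.mem_ofPred_eq] at hw; exact hw i) hz

lemma PP_closed : IsClosed PP := by
  have : PP = ⋂ i, {z | 0 ≤ sd i z} := by ext; simp [PP]
  rw [this]
  exact isClosed_iInter fun i => isClosed_le continuous_const (lf_cont _ _ _)

lemma PP_convex : Convex ℝ PP := by
  have : PP = ⋂ i, {z | 0 ≤ sd i z} := by ext; simp [PP]
  rw [this]
  exact convex_iInter fun i => convex_lf _ _ _

lemma vt_mem (i : Fin 5) : vt i ∈ PP := by
  rw [mem_PP_iff]
  fin_cases i <;> (simp [vt, InP, vx, vy]; try norm_num)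

lemma mem_tri {S : Set Plane} (hS : Convex ℝ S) {u v w : Plane} (hu : u ∈ S) (hv : v ∈ S)
    (hw : w ∈ S) {a b c : ℝ} (ha : 0 ≤ a) (hb : 0 ≤ b) (hc : 0 ≤ c) (habc : a + b + c = 1)
    {z : Plane} (hx : cX z = a * cX u + b * cX v + c * cX w)
    (hy : cY z = a * cY u + b * cY v + c * cY w) : z ∈ S := by
  have h := hS.sum_mem (t := Finset.univ) (w := ![a, b, c]) (z := ![u, v, w])
    (by intro i _; fin_cases i <;> simpa) (by simp [Fin.sum_univ_succ]; linarith)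
    (by intro i _; fin_cases i <;> simpa)
  convert h
  apply ext_co
  · rw [hx]; simp [Fin.sum_univ_succ, cX]; ring
  · rw [hy]; simp [Fin.sum_univ_succ, cY]; ring

lemma hull_eq : convexHull ℝ (Set.range vt) = PP := by
  apply Set.Subset.antisymm
  · refine convexHull_min ?_ PP_convex
    rintro _ ⟨i, rfl⟩
    exact vt_mem i
  · intro z hz
    have hm : ∀ i, vt i ∈ convexHull ℝ (Set.range vt) := fun i => subset_convexHull _ _ ⟨i, rfl⟩
    have hc := convex_convexHull ℝ (Set.range vt)
    rw [mem_PP_iff] at hz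
    obtain ⟨h0, h1, h2, h3, h4⟩ := hz
    set x := cX z with hx
    set y := cY z with hy
    rcases le_total (9 * y) x with h | h
    · refine mem_tri hc (hm 0) (hm 1) (hm 2) (a := 1 - (x - 9 * y) / 14 - (x + 5 * y) / 14)
        (b := (x - 9 * y) / 14) (c := (x + 5 * y) / 14) ?_ ?_ ?_ ?_ ?_ ?_
      any_goals linarith
      all_goals simp [vt, vx, vy]; linarith
    rcases le_total (2 * y) x with h' | h'
    · refine mem_tri hc (hm 0) (hm 2) (hm 3) (a := 1 - (x - 2 * y) / 7 - (9 * y - x) / 28)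
        (b := (x - 2 * y) / 7) (c := (9 * y - x) / 28) ?_ ?_ ?_ ?_ ?_ ?_
      any_goals linarith
      all_goals simp [vt, vx, vy]; linarith
    · refine mem_tri hc (hm 0) (hm 3) (hm 4) (a := 1 - (x - y) / 4 - (2 * y - x) / 3)
        (b := (x - y) / 4) (c := (2 * y - x) / 3) ?_ ?_ ?_ ?_ ?_ ?_
      any_goals linarith
      all_goals simp [vt, vx, vy]; linarith

/-- Functionals cutting off the vertices. -/
def kA : Fin 5 → ℝ := ![1, -1, -5, -1, 4]
def kB : Fin 5 → ℝ := ![1, 4, 3, -3, -7]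
def kC : Fin 5 → ℝ := ![-1, 8, 30, 19, 4]

/-- The pentagon. -/
def pent : ConvexPentagon where
  V := vt
  strictlyConvex := by
    intro i hi
    have hsub : convexHull ℝ (vt '' {j | j ≠ i}) ⊆ {z | 0 < lf (kA i) (kB i) (kC i) z} := by
      refine convexHull_min ?_ (convex_lf_pos _ _ _)
      rintro _ ⟨j, hj, rfl⟩
      simp only [Set.mem_ofPred_eq, lf, vt, cX_pt, cY_pt] at hj ⊢
      fin_cases i <;> fin_cases j <;> first | exact absurd rfl hj | (simp [kA, kB, kC, vx, vy]; try norm_num)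
    have := hsub hi
    simp only [Set.mem_ofPred_eq, lf, vt, cX_pt, cY_pt] at this
    revert this
    fin_cases i <;> (simp [kA, kB, kC, vx, vy]; try norm_num)
  cyclic := by
    intro i z hz
    rw [hull_eq]
    have hzP : z ∈ PP := PP_convex.segment_subset (vt_mem _) (vt_mem _) hz
    refine ⟨subset_closure hzP, fun hzint => ?_⟩
    have hpos := interior_PP hzint i
    obtain ⟨s, t, hs, ht, hst, rfl⟩ := hz
    rw [sd, lf_comb _ _ _ _ _ hst] at hpos
    revert hpos
    simp only [lf, vt, cX_pt, cY_pt]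
    fin_cases i <;> (simp [cA, cB, cC, vx, vy]; try norm_num)

lemma pent_carrier : pent.carrier = PP := hull_eq


/-! ## The tiling -/

/-- The sign attached to a Boolean. -/
def sg (b : Bool) : ℝ := if b then -1 else 1

/-- Offsets of the glide reflections and half-turns. -/
def ofX (s t : Bool) : ℝ :=
  if s then (if t then 11 else 2) else (if t then 9 else 0)

def ofY (s t : Bool) : ℝ :=
  if s then (if t then 7 else 6) else (if t then 1 else 0)

/-- The coordinates of the (inverse of the) symmetry with index `s, t, m, n`. -/
def TX (s t : Bool) (m : ℤ) (x : ℝ) : ℝ := sg s * (x - ofX s t - 18 * m)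

def TY (s t : Bool) (n : ℤ) (y : ℝ) : ℝ := sg t * (y - ofY s t - 12 * n)

lemma TX_comp (s t s' t' : Bool) (m m' : ℤ) :
    ∃ k : ℤ, ∀ x, TX s t m (TX s' t' m' x) = TX (xor s s') (xor t t') k x := by
  cases s <;> cases t <;> cases s' <;> cases t' <;> simp only [TX, sg, ofX] <;> simp
  · exact ⟨m + m', fun x => by push_cast; ring⟩
  · exact ⟨m + m', fun x => by push_cast; ring⟩
  · exact ⟨m' - m, fun x => by push_cast; ring⟩
  · exact ⟨m' - m, fun x => by push_cast; ring⟩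
  · exact ⟨m + m', fun x => by push_cast; ring⟩
  · exact ⟨m + m' + 1, fun x => by push_cast; ring⟩
  · exact ⟨m' - m - 1, fun x => by push_cast; ring⟩
  · exact ⟨m' - m, fun x => by push_cast; ring⟩
  · exact ⟨m + m', fun x => by push_cast; ring⟩
  · exact ⟨m + m', fun x => by push_cast; ring⟩
  · exact ⟨m' - m, fun x => by push_cast; ring⟩
  · exact ⟨m' - m, fun x => by push_cast; ring⟩
  · exact ⟨m + m', fun x => by push_cast; ring⟩
  · exact ⟨m + m' + 1, fun x => by push_cast; ring⟩
  · exact ⟨m' - m - 1, fun x => by push_cast; ring⟩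
  · exact ⟨m' - m, fun x => by push_cast; ring⟩

lemma TY_comp (s t s' t' : Bool) (n n' : ℤ) :
    ∃ k : ℤ, ∀ y, TY s t n (TY s' t' n' y) = TY (xor s s') (xor t t') k y := by
  have key : ∀ k : ℤ, (ofY (xor s s') (xor t t') + 12 * k =
      ofY s' t' + 12 * n' + sg t' * (ofY s t + 12 * n)) →
      ∀ y, TY s t n (TY s' t' n' y) = TY (xor s s') (xor t t') k y := by
    intro k hk y
    have h2 : sg t' * sg t' = 1 := by cases t' <;> simp [sg]
    have h3 : sg (xor t t') = sg t * sg t' := by cases t <;> cases t' <;> simp [sg]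
    simp only [TY, h3]
    linear_combination (sg t * sg t') * hk + sg t * (ofY s t + 12 * n) * h2
  have : ∃ c : ℤ, ofY (xor s s') (xor t t') + 12 * c = ofY s' t' + sg t' * ofY s t := by
    cases s <;> cases t <;> cases s' <;> cases t' <;> first
      | (refine ⟨0, ?_⟩; norm_num [sg, ofY]; done)
      | (refine ⟨1, ?_⟩; norm_num [sg, ofY]; done)
      | (refine ⟨-1, ?_⟩; norm_num [sg, ofY]; done)
  obtain ⟨c, hc⟩ := this
  cases ht : t'
  · refine ⟨c + n' + n, ?_⟩
    rw [← ht]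
    apply key
    have : sg t' = 1 := by simp [ht, sg]
    rw [this] at hc ⊢
    push_cast
    linarith
  · refine ⟨c + n' - n, ?_⟩
    rw [← ht]
    apply key
    have : sg t' = -1 := by simp [ht, sg]
    rw [this] at hc ⊢
    push_cast
    linarith

lemma TX_inv (s t : Bool) (m : ℤ) :
    ∃ k : ℤ, (∀ x, TX s t k (TX s t m x) = x) ∧ (∀ x, TX s t m (TX s t k x) = x) := by
  cases s <;> cases t <;> simp only [TX, sg, ofX] <;> simp
  · exact ⟨-m, fun x => by push_cast; ring, fun x => by push_cast; ring⟩
  · exact ⟨-m - 1, fun x => by push_cast; ring, fun x => by push_cast; ring⟩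
  · exact ⟨m, fun x => by ring, fun x => by ring⟩
  · exact ⟨m, fun x => by ring, fun x => by ring⟩

lemma TY_inv (s t : Bool) (m : ℤ) :
    ∃ k : ℤ, (∀ x, TY s t k (TY s t m x) = x) ∧ (∀ x, TY s t m (TY s t k x) = x) := by
  cases s <;> cases t <;> simp only [TY, sg, ofY] <;> simp
  · exact ⟨-m, fun x => by push_cast; ring, fun x => by push_cast; ring⟩
  · exact ⟨m, fun x => by ring, fun x => by ring⟩
  · exact ⟨-m - 1, fun x => by push_cast; ring, fun x => by push_cast; ring⟩
  · exact ⟨m, fun x => by ring, fun x => by ring⟩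

/-- The reflection swapping the two kinds of tiles. -/
def rX (e : Bool) (x y : ℝ) : ℝ := if e then -x / 2 + 3 * y / 2 else x

def rY (e : Bool) (x y : ℝ) : ℝ := if e then x / 2 + y / 2 else y

/-- Membership in one of the two basic tiles. -/
def InE (e : Bool) (x y : ℝ) : Prop := InP (rX e x y) (rY e x y)

def InEs (e : Bool) (x y : ℝ) : Prop := InPs (rX e x y) (rY e x y)

lemma InEs_bd {e : Bool} {x y : ℝ} (h : InEs e x y) : -4 < x ∧ x < 9 ∧ -1 < y ∧ y < 6 := by
  cases e <;> simp only [InEs, InPs, rX, rY] at h <;> simp at h <;>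
    obtain ⟨h0, h1, h2, h3, h4⟩ := h <;> refine ⟨?_, ?_, ?_, ?_⟩ <;> linarith

lemma sep {e e' s t : Bool} {m n : ℤ} {x y : ℝ} (h : InEs e x y)
    (h' : InEs e' (TX s t m x) (TY s t n y)) :
    e = e' ∧ s = false ∧ t = false ∧ m = 0 ∧ n = 0 := by
  obtain ⟨a1, a2, a3, a4⟩ := InEs_bd h
  obtain ⟨b1, b2, b3, b4⟩ := InEs_bd h'
  have hm1 : -1 ≤ m := by
    by_contra hc
    have : (m : ℝ) ≤ -2 := by exact_mod_cast (by omega : m ≤ -2)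
    cases s <;> cases t <;> simp only [TX, sg, ofX] at b1 b2 <;> simp at b1 b2 <;> linarith
  have hm2 : m ≤ 0 := by
    by_contra hc
    have : (1 : ℝ) ≤ m := by exact_mod_cast (by omega : 1 ≤ m)
    cases s <;> cases t <;> simp only [TX, sg, ofX] at b1 b2 <;> simp at b1 b2 <;> linarith
  have hn1 : -1 ≤ n := by
    by_contra hc
    have : (n : ℝ) ≤ -2 := by exact_mod_cast (by omega : n ≤ -2)
    cases s <;> cases t <;> simp only [TY, sg, ofY] at b3 b4 <;> simp at b3 b4 <;> linarith
  have hn2 : n ≤ 0 := by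
    by_contra hc
    have : (1 : ℝ) ≤ n := by exact_mod_cast (by omega : 1 ≤ n)
    cases s <;> cases t <;> simp only [TY, sg, ofY] at b3 b4 <;> simp at b3 b4 <;> linarith
  clear a1 a2 a3 a4 b1 b2 b3 b4
  have hm : m = 0 ∨ m = -1 := by omega
  have hn : n = 0 ∨ n = -1 := by omega
  clear hm1 hm2 hn1 hn2
  rcases hm with rfl | rfl <;> rcases hn with rfl | rfl <;>
    cases e <;> cases e' <;> cases s <;> cases t <;>
    first
    | exact ⟨rfl, rfl, rfl, rfl, rfl⟩
    | (exfalso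
       simp only [InEs, InPs, rX, rY, TX, TY, sg, ofX, ofY, if_true, if_false, Bool.false_eq_true,
         Int.cast_zero, Int.cast_neg, Int.cast_one] at h h'
       obtain ⟨h0, h1, h2, h3, h4⟩ := h
       obtain ⟨k0, k1, k2, k3, k4⟩ := h'
       linarith)

lemma cov_unit {x y : ℝ} (hx1 : 11 / 2 ≤ x) (hx2 : x ≤ 29 / 2) (hy1 : 7 / 2 ≤ y)
    (hy2 : y ≤ 19 / 2) : ∃ (e s t : Bool) (m n : ℤ), InE e (TX s t m x) (TY s t n y) := by
  have fin : ∀ (e s t : Bool) (m n : ℤ), InE e (TX s t m x) (TY s t n y) →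
    ∃ (e s t : Bool) (m n : ℤ), InE e (TX s t m x) (TY s t n y) :=
    fun e s t m n h => ⟨e, s, t, m, n, h⟩
  rcases le_total 0 (1 * x + (2) * y + (-25)) with h | h
  · rcases le_total 0 (3 * x + (-1) * y + (-26)) with h' | h'
    · apply fin false true false 1 0
      simp [InE, InP, rX, rY, TX, TY, sg, ofX, ofY]
      refine ⟨?_, ?_, ?_, ?_, ?_⟩ <;> linarith
    · apply fin true false true 0 1
      simp [InE, InP, rX, rY, TX, TY, sg, ofX, ofY]
      refine ⟨?_, ?_, ?_, ?_, ?_⟩ <;> linarith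
  · rcases le_total 0 (1 * x + (-2) * y + (10)) with h' | h'
    · rcases le_total 0 (1 * x + (5) * y + (-46)) with h2 | h2
      · apply fin true false true 0 1
        simp [InE, InP, rX, rY, TX, TY, sg, ofX, ofY]
        refine ⟨?_, ?_, ?_, ?_, ?_⟩ <;> linarith
      · rcases le_total 0 (3 * x + (1) * y + (-28)) with h3 | h3
        · rcases le_total 0 (1 * x + (-1) * y + (-4)) with h4 | h4
          · apply fin true true true 0 0
            simp [InE, InP, rX, rY, TX, TY, sg, ofX, ofY]
            refine ⟨?_, ?_, ?_, ?_, ?_⟩ <;> linarith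
          · apply fin false true true 0 0
            simp [InE, InP, rX, rY, TX, TY, sg, ofX, ofY]
            refine ⟨?_, ?_, ?_, ?_, ?_⟩ <;> linarith
        · rcases le_total 0 (1 * x + (-5) * y + (12)) with h4 | h4
          · apply fin false false false 0 0
            simp [InE, InP, rX, rY, TX, TY, sg, ofX, ofY]
            refine ⟨?_, ?_, ?_, ?_, ?_⟩ <;> linarith
          · apply fin false true true 0 0
            simp [InE, InP, rX, rY, TX, TY, sg, ofX, ofY]
            refine ⟨?_, ?_, ?_, ?_, ?_⟩ <;> linarith
    · rcases le_total 0 (3 * x + (1) * y + (-26)) with h2 | h2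
      · apply fin true false true 0 1
        simp [InE, InP, rX, rY, TX, TY, sg, ofX, ofY]
        refine ⟨?_, ?_, ?_, ?_, ?_⟩ <;> linarith
      · apply fin true true false 0 0
        simp [InE, InP, rX, rY, TX, TY, sg, ofX, ofY]
        refine ⟨?_, ?_, ?_, ?_, ?_⟩ <;> linarith

lemma to_unit (x y : ℝ) : ∃ (s t : Bool) (m n : ℤ), 11 / 2 ≤ TX s t m x ∧ TX s t m x ≤ 29 / 2 ∧
    7 / 2 ≤ TY s t n y ∧ TY s t n y ≤ 19 / 2 := by
  have hx1 := Int.floor_le ((x - 11 / 2) / 18)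
  have hx2 := Int.lt_floor_add_one ((x - 11 / 2) / 18)
  have hy1 := Int.floor_le ((y - 7 / 2) / 12)
  have hy2 := Int.lt_floor_add_one ((y - 7 / 2) / 12)
  set m := ⌊(x - 11 / 2) / 18⌋
  set n := ⌊(y - 7 / 2) / 12⌋
  have fin : ∀ (s t : Bool) (m n : ℤ), (11 / 2 ≤ TX s t m x ∧ TX s t m x ≤ 29 / 2 ∧
    7 / 2 ≤ TY s t n y ∧ TY s t n y ≤ 19 / 2) →
    ∃ (s t : Bool) (m n : ℤ), 11 / 2 ≤ TX s t m x ∧ TX s t m x ≤ 29 / 2 ∧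
    7 / 2 ≤ TY s t n y ∧ TY s t n y ≤ 19 / 2 := fun s t m n h => ⟨s, t, m, n, h⟩
  rcases le_total (x - 18 * m) (29 / 2) with h | h <;>
    rcases le_total (y - 12 * n) (19 / 2) with h' | h'
  · apply fin false false m n
    simp [TX, TY, sg, ofX, ofY]
    refine ⟨?_, ?_, ?_, ?_⟩ <;> linarith
  · apply fin true false (m + 1) n
    simp [TX, TY, sg, ofX, ofY]
    refine ⟨?_, ?_, ?_, ?_⟩ <;> linarith
  · apply fin false true m (n + 1)
    simp [TX, TY, sg, ofX, ofY]
    refine ⟨?_, ?_, ?_, ?_⟩ <;> linarith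
  · apply fin true true (m + 1) (n + 1)
    simp [TX, TY, sg, ofX, ofY]
    refine ⟨?_, ?_, ?_, ?_⟩ <;> linarith

lemma cov_all (x y : ℝ) : ∃ (e s t : Bool) (m n : ℤ), InE e (TX s t m x) (TY s t n y) := by
  obtain ⟨s, t, m, n, h1, h2, h3, h4⟩ := to_unit x y
  obtain ⟨e, s', t', m', n', h⟩ := cov_unit h1 h2 h3 h4
  obtain ⟨k, hk⟩ := TX_comp s' t' s t m' m
  obtain ⟨l, hl⟩ := TY_comp s' t' s t n' n
  rw [hk, hl] at h
  exact ⟨e, _, _, _, _, h⟩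

/-- The isometry with index `s, t, m, n`. -/
lemma exists_iso (s t : Bool) (m n : ℤ) :
    ∃ g : Plane ≃ᵢ Plane, ∀ z, cX (g z) = TX s t m (cX z) ∧ cY (g z) = TY s t n (cY z) := by
  obtain ⟨k, hk1, hk2⟩ := TX_inv s t m
  obtain ⟨l, hl1, hl2⟩ := TY_inv s t n
  refine ⟨IsometryEquiv.mk' (fun z => pt (TX s t m (cX z)) (TY s t n (cY z)))
    (fun z => pt (TX s t k (cX z)) (TY s t l (cY z))) ?_ ?_, ?_⟩
  · intro z
    simp [hk2, hl2, pt_co]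
  · refine Isometry.of_dist_eq fun z w => ?_
    rw [← sq_eq_sq₀ dist_nonneg dist_nonneg, dist_sq_co, dist_sq_co]
    simp only [cX_pt, cY_pt, TX, TY]
    have h2 : sg t * sg t = 1 := by cases t <;> simp [sg]
    have h3 : sg s * sg s = 1 := by cases s <;> simp [sg]
    linear_combination (cX z - cX w) ^ 2 * h3 + 3 * (cY z - cY w) ^ 2 * h2
  · intro z
    simp [IsometryEquiv.mk']

lemma exists_refl (e : Bool) :
    ∃ g : Plane ≃ᵢ Plane, ∀ z, cX (g z) = rX e (cX z) (cY z) ∧ cY (g z) = rY e (cX z) (cY z) := by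
  refine ⟨IsometryEquiv.mk' (fun z => pt (rX e (cX z) (cY z)) (rY e (cX z) (cY z)))
    (fun z => pt (rX e (cX z) (cY z)) (rY e (cX z) (cY z))) ?_ ?_, ?_⟩
  · intro z
    apply ext_co <;> cases e <;> simp [rX, rY] <;> ring
  · refine Isometry.of_dist_eq fun z w => ?_
    rw [← sq_eq_sq₀ dist_nonneg dist_nonneg, dist_sq_co, dist_sq_co]
    simp only [cX_pt, cY_pt]
    cases e <;> simp [rX, rY] <;> ring
  · intro z
    simp [IsometryEquiv.mk']

/-- The tile with index `e, s, t, m, n`. -/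
def tl (e s t : Bool) (m n : ℤ) : Set Plane := {z | InE e (TX s t m (cX z)) (TY s t n (cY z))}

lemma tl_iso (e s t : Bool) (m n : ℤ) : ∃ g : Plane ≃ᵢ Plane, tl e s t m n = g ⁻¹' PP := by
  obtain ⟨g, hg⟩ := exists_iso s t m n
  obtain ⟨r, hr⟩ := exists_refl e
  refine ⟨g.trans r, ?_⟩
  ext z
  rw [Set.mem_preimage, mem_PP_iff]
  simp only [tl, Set.mem_ofPred_eq, IsometryEquiv.trans_apply, hr, hg, InE]

lemma tl_interior {e s t : Bool} {m n : ℤ} {z : Plane} (hz : z ∈ interior (tl e s t m n)) :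
    InEs e (TX s t m (cX z)) (TY s t n (cY z)) := by
  obtain ⟨g, hg⟩ := exists_iso s t m n
  obtain ⟨r, hr⟩ := exists_refl e
  have h : tl e s t m n = (g.trans r).toHomeomorph ⁻¹' PP := by
    ext z
    rw [Set.mem_preimage, mem_PP_iff]
    simp only [tl, Set.mem_ofPred_eq, IsometryEquiv.coe_toHomeomorph, IsometryEquiv.trans_apply,
      hr, hg, InE]
  rw [h, ← Homeomorph.preimage_interior, Set.mem_preimage] at hz
  have := (sd_pos_iff _).1 (interior_PP hz)
  rw [InEs]
  simpa only [IsometryEquiv.coe_toHomeomorph, IsometryEquiv.trans_apply, hr, hg] using this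

theorem exists_tiling : ∃ T : Set (Set Plane), IsMonohedralTiling pent.carrier T := by
  rw [pent_carrier]
  refine ⟨{S | ∃ (e s t : Bool) (m n : ℤ), S = tl e s t m n}, ?_, ?_, ?_⟩
  · rintro _ ⟨e, s, t, m, n, rfl⟩
    obtain ⟨g, hg⟩ := tl_iso e s t m n
    exact ⟨g.symm, by rw [hg, IsometryEquiv.image_symm]⟩
  · rw [Set.eq_univ_iff_forall]
    intro z
    obtain ⟨e, s, t, m, n, h⟩ := cov_all (cX z) (cY z)
    exact ⟨_, ⟨e, s, t, m, n, rfl⟩, h⟩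
  · rintro _ ⟨e, s, t, m, n, rfl⟩ _ ⟨e', s', t', m', n', rfl⟩ hne
    rw [Set.eq_empty_iff_forall_notMem]
    rintro z ⟨h1, h2⟩
    apply hne
    replace h1 := tl_interior h1
    replace h2 := tl_interior h2
    obtain ⟨k, hk1, hk2⟩ := TX_inv s t m
    obtain ⟨l, hl1, hl2⟩ := TY_inv s t n
    obtain ⟨k', hk'⟩ := TX_comp s' t' s t m' k
    obtain ⟨l', hl'⟩ := TY_comp s' t' s t n' l
    rw [← hk1 (cX z), ← hl1 (cY z), hk', hl'] at h2
    obtain ⟨rfl, a, b, rfl, rfl⟩ := sep h1 h2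
    rw [a, b] at hk' hl'
    have hx : ∀ x, TX s' t' m' x = TX s t m x := by
      intro x
      have := hk' (TX s t m x)
      rw [hk1] at this
      rw [this]; simp [TX, sg, ofX]
    have hy : ∀ x, TY s' t' n' x = TY s t n x := by
      intro x
      have := hl' (TY s t n x)
      rw [hl1] at this
      rw [this]; simp [TY, sg, ofY]
    simp only [tl, hx, hy]

/-! ## Local densities -/

open MeasureTheory

lemma vol_image (g : Plane ≃ᵢ Plane) (S : Set Plane) : volume (g '' S) = volume S := by
  have h := g.isometry.hausdorffMeasure_image (d := ((2 : ℕ) : ℝ)) (by simp) S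
  have h2 := Measure.isAddLeftInvariant_eq_smul (volume : Measure Plane)
    (Measure.hausdorffMeasure ((2 : ℕ) : ℝ))
  rw [h2]
  simp only [Measure.smul_apply]
  rw [h]

lemma sin_cone {α β θ : ℝ} (h1 : -Real.pi < α) (h2 : α < β) (h3 : β < Real.pi)
    (h4 : β - α < Real.pi) (h5 : -Real.pi < θ) (h6 : θ < Real.pi) :
    (0 ≤ Real.sin (θ - α) ∧ 0 ≤ Real.sin (β - θ)) ↔ θ ∈ Set.Icc α β := by
  have key : ∀ x, Real.pi < x → x < 2 * Real.pi → Real.sin x < 0 := by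
    intro x hx hx'
    have := Real.sin_pos_of_pos_of_lt_pi (x := x - Real.pi) (by linarith) (by linarith)
    rw [Real.sin_sub_pi] at this
    linarith
  constructor
  · rintro ⟨ha, hb⟩
    constructor
    · by_contra hlt
      push Not at hlt
      rcases le_or_gt (-Real.pi) (θ - α) with h | h
      · rcases h.eq_or_lt with h | h
        · linarith [key (β - θ) (by linarith) (by linarith)]
        · have := Real.sin_neg_of_neg_of_neg_pi_lt (x := θ - α) (by linarith) h
          linarith
      · linarith [key (β - θ) (by linarith) (by linarith)]
    · by_contra hlt
      push Not at hlt
      rcases le_or_gt (-Real.pi) (β - θ) with h | h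
      · rcases h.eq_or_lt with h | h
        · linarith [key (θ - α) (by linarith) (by linarith)]
        · have := Real.sin_neg_of_neg_of_neg_pi_lt (x := β - θ) (by linarith) h
          linarith
      · linarith [key (θ - α) (by linarith) (by linarith)]
  · rintro ⟨ha, hb⟩
    exact ⟨Real.sin_nonneg_of_nonneg_of_le_pi (by linarith) (by linarith),
      Real.sin_nonneg_of_nonneg_of_le_pi (by linarith) (by linarith)⟩

lemma sector_meas (α β r : ℝ) :
    MeasurableSet {p : ℝ × ℝ | p.1 ^ 2 + p.2 ^ 2 < r ^ 2 ∧
      0 ≤ p.2 * Real.cos α - p.1 * Real.sin α ∧ 0 ≤ p.1 * Real.sin β - p.2 * Real.cos β} := by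
  have m1 : MeasurableSet {p : ℝ × ℝ | p.1 ^ 2 + p.2 ^ 2 < r ^ 2} :=
    measurableSet_lt (by fun_prop) (by fun_prop)
  have m2 : MeasurableSet {p : ℝ × ℝ | 0 ≤ p.2 * Real.cos α - p.1 * Real.sin α} :=
    measurableSet_le (by fun_prop) (by fun_prop)
  have m3 : MeasurableSet {p : ℝ × ℝ | 0 ≤ p.1 * Real.sin β - p.2 * Real.cos β} :=
    measurableSet_le (by fun_prop) (by fun_prop)
  exact m1.inter (m2.inter m3)

lemma sector_prod {α β r : ℝ} (h1 : -Real.pi < α) (h2 : α < β) (h3 : β < Real.pi)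
    (h4 : β - α < Real.pi) (hr : 0 < r) :
    volume {p : ℝ × ℝ | p.1 ^ 2 + p.2 ^ 2 < r ^ 2 ∧ 0 ≤ p.2 * Real.cos α - p.1 * Real.sin α ∧
      0 ≤ p.1 * Real.sin β - p.2 * Real.cos β} = ENNReal.ofReal ((β - α) / 2 * r ^ 2) := by
  set S := {p : ℝ × ℝ | p.1 ^ 2 + p.2 ^ 2 < r ^ 2 ∧ 0 ≤ p.2 * Real.cos α - p.1 * Real.sin α ∧
      0 ≤ p.1 * Real.sin β - p.2 * Real.cos β} with hS
  have hSm : MeasurableSet S := sector_meas α β r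
  rw [← lintegral_indicator_one hSm, ← lintegral_comp_polarCoord_symm]
  have hstep : ∀ p ∈ polarCoord.target,
      ENNReal.ofReal p.1 • S.indicator (1 : ℝ × ℝ → ENNReal) (polarCoord.symm p) =
      (Set.Ioo 0 r ×ˢ Set.Icc α β).indicator (fun p : ℝ × ℝ => ENNReal.ofReal p.1) p := by
    rintro ⟨ρ, θ⟩ hp
    simp only [polarCoord, Set.mem_prod, Set.mem_Ioi, Set.mem_Ioo] at hp
    obtain ⟨hρ, hθ1, hθ2⟩ := hp
    have hiff : polarCoord.symm (ρ, θ) ∈ S ↔ (ρ, θ) ∈ Set.Ioo 0 r ×ˢ Set.Icc α β := by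
      rw [hS, Set.mem_ofPred_eq, Set.mem_prod, ← sin_cone h1 h2 h3 h4 hθ1 hθ2]
      simp only [polarCoord_symm_apply, Set.mem_Ioo]
      have e1 : (ρ * Real.cos θ) ^ 2 + (ρ * Real.sin θ) ^ 2 = ρ ^ 2 := by
        linear_combination ρ ^ 2 * Real.sin_sq_add_cos_sq θ
      have e2 : ρ * Real.sin θ * Real.cos α - ρ * Real.cos θ * Real.sin α
          = ρ * Real.sin (θ - α) := by rw [Real.sin_sub]; ring
      have e3 : ρ * Real.cos θ * Real.sin β - ρ * Real.sin θ * Real.cos β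
          = ρ * Real.sin (β - θ) := by rw [Real.sin_sub]; ring
      rw [e1, e2, e3, mul_nonneg_iff_of_pos_left hρ, mul_nonneg_iff_of_pos_left hρ,
        pow_lt_pow_iff_left₀ hρ.le hr.le (by norm_num)]
      simp [hρ]
    by_cases h : polarCoord.symm (ρ, θ) ∈ S
    · rw [Set.indicator_of_mem h, Set.indicator_of_mem (hiff.1 h)]; simp
    · rw [Set.indicator_of_notMem h, Set.indicator_of_notMem (fun h' => h (hiff.2 h'))]; simp
  rw [setLIntegral_congr_fun polarCoord.open_target.measurableSet hstep,
    setLIntegral_indicator (measurableSet_Ioo.prod measurableSet_Icc)]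
  have hsub : (Set.Ioo 0 r ×ˢ Set.Icc α β) ∩ polarCoord.target = Set.Ioo 0 r ×ˢ Set.Icc α β := by
    apply Set.inter_eq_left.2
    rintro ⟨ρ, θ⟩ ⟨⟨ha, hb⟩, ⟨hc, hd⟩⟩
    simp only [polarCoord, Set.mem_prod, Set.mem_Ioi, Set.mem_Ioo]
    exact ⟨ha, by linarith, by linarith⟩
  rw [hsub, Measure.volume_eq_prod, ← Measure.prod_restrict]
  have hm := lintegral_prod_mul (μ := (volume : Measure ℝ).restrict (Set.Ioo 0 r))
    (ν := (volume : Measure ℝ).restrict (Set.Icc α β)) (f := fun x => ENNReal.ofReal x)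
    (g := fun _ => 1) (by fun_prop) (by fun_prop)
  simp only [mul_one] at hm
  rw [hm]
  have hi : ∫⁻ x in Set.Ioo 0 r, ENNReal.ofReal x = ENNReal.ofReal (r ^ 2 / 2) := by
    rw [restrict_Ioo_eq_restrict_Ioc, ← ofReal_integral_eq_lintegral_ofReal]
    · rw [← intervalIntegral.integral_of_le hr.le, integral_id]; simp
    · exact (continuous_id.integrableOn_Icc (a := 0) (b := r)).mono_set Set.Ioc_subset_Icc_self
    · filter_upwards [ae_restrict_mem measurableSet_Ioc] with x hx using hx.1.le
  rw [hi]
  simp only [lintegral_const, one_mul, Measure.restrict_apply_univ, Real.volume_Icc]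
  rw [← ENNReal.ofReal_mul (by positivity)]
  congr 1; ring

lemma sector_plane {α β r : ℝ} (h1 : -Real.pi < α) (h2 : α < β) (h3 : β < Real.pi)
    (h4 : β - α < Real.pi) (hr : 0 < r) :
    volume ({z : Plane | 0 ≤ z 1 * Real.cos α - z 0 * Real.sin α ∧
      0 ≤ z 0 * Real.sin β - z 1 * Real.cos β} ∩ Metric.ball 0 r)
      = ENNReal.ofReal ((β - α) / 2 * r ^ 2) := by
  rw [← sector_prod h1 h2 h3 h4 hr]
  have hmp := (volume_preserving_finTwoArrow ℝ).comp (PiLp.volume_preserving_ofLp (Fin 2))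
  rw [← hmp.measure_preimage]
  · congr 1
    ext z
    simp only [Set.mem_inter_iff, Set.mem_ofPred_eq, Set.mem_preimage, Function.comp,
      MeasurableEquiv.finTwoArrow_apply, mem_ball_zero_iff, EuclideanSpace.norm_eq,
      Fin.sum_univ_two, Real.norm_eq_abs, sq_abs]
    rw [Real.sqrt_lt' hr]
    tauto
  · exact (sector_meas α β r).nullMeasurableSet

/-- `S` has (two-dimensional) density `d` at `v`. -/
def HasDens (S : Set Plane) (v : Plane) (d : ℝ) : Prop :=
  ∃ R > 0, ∀ r, 0 < r → r < R → volume (S ∩ Metric.ball v r) = ENNReal.ofReal (d * r ^ 2)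

lemma HasDens.congr {S S' : Set Plane} {v : Plane} {d : ℝ} (h : HasDens S v d)
    (hS : ∀ᶠ z in nhds v, z ∈ S ↔ z ∈ S') : HasDens S' v d := by
  obtain ⟨R, hR, h⟩ := h
  obtain ⟨ε, hε, hb⟩ := Metric.eventually_nhds_iff.1 hS
  refine ⟨min R ε, lt_min hR hε, fun r hr hr' => ?_⟩
  rw [← h r hr (hr'.trans_le (min_le_left _ _))]
  congr 1
  ext z
  simp only [Set.mem_inter_iff, Metric.mem_ball]
  constructor
  · rintro ⟨ha, hz⟩
    exact ⟨(hb (hz.trans (hr'.trans_le (min_le_right _ _)))).2 ha, hz⟩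
  · rintro ⟨ha, hz⟩
    exact ⟨(hb (hz.trans (hr'.trans_le (min_le_right _ _)))).1 ha, hz⟩

lemma HasDens.image {S : Set Plane} {v : Plane} {d : ℝ} (h : HasDens S v d)
    (g : Plane ≃ᵢ Plane) : HasDens (g '' S) (g v) d := by
  obtain ⟨R, hR, h⟩ := h
  refine ⟨R, hR, fun r hr hr' => ?_⟩
  rw [← h r hr hr', ← vol_image g (S ∩ _), Set.image_inter g.injective, IsometryEquiv.image_ball]

lemma dens_univ (v : Plane) : HasDens Set.univ v Real.pi := by
  refine ⟨1, one_pos, fun r hr _ => ?_⟩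
  rw [Set.univ_inter, EuclideanSpace.volume_ball_fin_two, mul_comm Real.pi,
    ENNReal.ofReal_mul (by positivity), ENNReal.ofReal_pow hr.le]

/-- The homogeneous linear part. -/
lemma dens_half {a b : ℝ} (hab : a ≠ 0 ∨ b ≠ 0) :
    HasDens {z | 0 ≤ lf a b 0 z} 0 (Real.pi / 2) := by
  refine ⟨1, one_pos, fun r hr _ => ?_⟩
  set H := {z | 0 ≤ lf a b 0 z} with hH
  set H' := {z | lf a b 0 z ≤ 0} with hH'
  have hneg : ∀ z, lf a b 0 (-z) = - lf a b 0 z := by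
    intro z; simp [lf, cX, cY]; ring
  have hc := lf_cont a b 0
  have hHm : IsClosed H := isClosed_le continuous_const hc
  have hHm' : IsClosed H' := isClosed_le hc continuous_const
  have e1 : volume (H' ∩ Metric.ball 0 r) = volume (H ∩ Metric.ball 0 r) := by
    rw [← vol_image (IsometryEquiv.neg Plane) (H ∩ Metric.ball 0 r)]
    congr 1
    ext z
    simp only [Set.mem_image, Set.mem_inter_iff, mem_ball_zero_iff]
    constructor
    · rintro ⟨ha, hb⟩
      refine ⟨-z, ⟨?_, by simpa using hb⟩, by simp⟩
      rw [hH', Set.mem_ofPred_eq] at ha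
      rw [hH, Set.mem_ofPred_eq, hneg]; linarith
    · rintro ⟨w, ⟨ha, hb⟩, rfl⟩
      refine ⟨?_, by simpa using hb⟩
      rw [hH, Set.mem_ofPred_eq] at ha
      rw [hH', Set.mem_ofPred_eq]
      simp only [IsometryEquiv.neg_apply, hneg]; linarith
  have e2 : volume (H ∩ H') = 0 := by
    have hfr : volume (frontier H) = 0 := (convex_lf a b 0).addHaar_frontier _
    refine measure_mono_null ?_ hfr
    rintro z ⟨hz, hz'⟩
    refine ⟨subset_closure hz, fun hi => ?_⟩
    have := lf_pos_of_interior (a := a) (b := b) (c := 0) hab (S := H) (fun z hz => by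
      rwa [hH, Set.mem_ofPred_eq] at hz) hi
    rw [hH', Set.mem_ofPred_eq] at hz'
    linarith
  have e3 : volume (Metric.ball (0 : Plane) r) =
      volume (H ∩ Metric.ball 0 r) + volume (H' ∩ Metric.ball 0 r) := by
    rw [← measure_union₀]
    · congr 1
      rw [← Set.union_inter_distrib_right]
      symm
      apply Set.inter_eq_right.2
      intro z _
      simp only [hH, hH', Set.mem_union, Set.mem_ofPred_eq]
      exact le_total _ _
    · exact (hHm'.measurableSet.inter measurableSet_ball).nullMeasurableSet
    · refine measure_mono_null ?_ e2
      rintro z ⟨ha, hb⟩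
      exact ⟨ha.1, hb.1⟩
  obtain ⟨R, hR, hu⟩ := dens_univ 0
  have hb : volume (Metric.ball (0 : Plane) r) = ENNReal.ofReal (Real.pi * r ^ 2) := by
    rw [EuclideanSpace.volume_ball_fin_two, mul_comm Real.pi,
      ENNReal.ofReal_mul (by positivity), ENNReal.ofReal_pow hr.le]
  rw [e1, hb] at e3
  have hfin : volume (H ∩ Metric.ball 0 r) ≠ ⊤ :=
    measure_ne_top_of_subset Set.inter_subset_right measure_ball_lt_top.ne
  rw [← ENNReal.ofReal_toReal hfin] at e3 ⊢
  rw [← ENNReal.ofReal_add ENNReal.toReal_nonneg ENNReal.toReal_nonneg,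
    ENNReal.ofReal_eq_ofReal_iff (by positivity) (by positivity)] at e3
  congr 1
  linarith

/-! ## The densities of the pentagon -/

open MeasureTheory

/-- The basic angle. -/
def cc : ℝ := Real.arctan (√3 / 5)

lemma cc_pos : 0 < cc := by
  unfold cc
  have := s3_pos
  rw [Real.arctan_pos]; positivity

lemma cc_lt : cc < Real.pi / 6 := by
  have h : Real.pi / 6 = Real.arctan (Real.tan (Real.pi / 6)) := by
    rw [Real.arctan_tan] <;> linarith [Real.pi_pos]
  rw [h, Real.tan_pi_div_six]
  unfold cc
  apply Real.arctan_strictMono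
  rw [lt_div_iff₀ s3_pos]
  have := s3_sq
  linarith

lemma cc_trig : ∃ k > 0, Real.cos cc = k * 5 ∧ Real.sin cc = k * √3 := by
  have hp : 0 < √(1 + (√3 / 5) ^ 2) := Real.sqrt_pos.2 (by positivity)
  refine ⟨1 / (5 * √(1 + (√3 / 5) ^ 2)), by positivity, ?_, ?_⟩
  · unfold cc; rw [Real.cos_arctan]; field_simp
  · unfold cc; rw [Real.sin_arctan]; field_simp

lemma dens_cone {α β u1 w1 u2 w2 k l : ℝ} (hk : 0 < k) (hl : 0 < l) (h1 : -Real.pi < α)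
    (h2 : α < β) (h3 : β < Real.pi) (h4 : β - α < Real.pi)
    (ca : Real.cos α = k * u1) (sa : Real.sin α = k * (w1 * √3))
    (cb : Real.cos β = l * u2) (sb : Real.sin β = l * (w2 * √3)) :
    HasDens {z | 0 ≤ lf (-w1) u1 0 z ∧ 0 ≤ lf w2 (-u2) 0 z} 0 ((β - α) / 2) := by
  refine ⟨1, one_pos, fun r hr _ => ?_⟩
  rw [← sector_plane h1 h2 h3 h4 hr]
  congr 2
  ext z
  have e0 : z 0 = cX z := rfl
  have e1 : z 1 = cY z * √3 := by unfold cY; field_simp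
  have hs := s3_pos
  simp only [Set.mem_ofPred_eq, ca, sa, cb, sb, e0, e1]
  have e2 : cY z * √3 * (k * u1) - cX z * (k * (w1 * √3)) = (k * √3) * lf (-w1) u1 0 z := by
    unfold lf; ring
  have e3 : cX z * (l * (w2 * √3)) - cY z * √3 * (l * u2) = (l * √3) * lf w2 (-u2) 0 z := by
    unfold lf; ring
  rw [e2, e3, mul_nonneg_iff_of_pos_left (by positivity),
    mul_nonneg_iff_of_pos_left (by positivity)]

lemma sd_eq_lf {v : Plane} {i : Fin 5} (h : sd i v = 0) (z : Plane) :
    sd i z = lf (cA i) (cB i) 0 (z - v) := by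
  have e : lf (cA i) (cB i) 0 (z - v) = sd i z - sd i v := by
    simp [sd, lf, cX, cY]; ring
  rw [e, h, sub_zero]

lemma PP_local {v : Plane} (hv : v ∈ PP) :
    ∀ᶠ z in nhds v, (∀ i, sd i v = 0 → 0 ≤ sd i z) ↔ z ∈ PP := by
  have h : ∀ᶠ z in nhds v, ∀ i, 0 < sd i v → 0 < sd i z := by
    rw [Filter.eventually_all]
    intro i
    by_cases hi : 0 < sd i v
    · filter_upwards [(lf_cont (cA i) (cB i) (cC i)).continuousAt.eventually (lt_mem_nhds hi)]
        with z hz _ using hz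
    · simp [hi]
  have hv' : ∀ i, 0 ≤ sd i v := by simpa only [PP, Set.mem_ofPred_eq] using hv
  filter_upwards [h] with z hz
  simp only [PP, Set.mem_ofPred_eq]
  refine ⟨fun hz' i => ?_, fun hz' i _ => hz' i⟩
  rcases (hv' i).eq_or_lt with h | h
  · exact hz' i h.symm
  · exact (hz i h).le

lemma HasDens.translate {S S' : Set Plane} {d : ℝ} (h : HasDens S 0 d) (v : Plane)
    (hS : ∀ z, z ∈ S' ↔ z - v ∈ S) : HasDens S' v d := by
  have := h.image (IsometryEquiv.addRight v)
  rw [IsometryEquiv.addRight_apply, zero_add] at this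
  convert this using 1
  ext z
  rw [hS, Set.mem_image]
  constructor
  · intro hz; exact ⟨z - v, hz, by simp⟩
  · rintro ⟨w, hw, rfl⟩; simpa using hw

lemma HasDens.translate_neg {S S' : Set Plane} {d : ℝ} (h : HasDens S 0 d) (v : Plane)
    (hS : ∀ z, z ∈ S' ↔ v - z ∈ S) : HasDens S' v d := by
  have h0 := h.image (IsometryEquiv.neg Plane)
  rw [IsometryEquiv.neg_apply, neg_zero] at h0
  refine h0.translate v fun z => ?_
  rw [hS, Set.mem_image]
  constructor
  · intro hz; exact ⟨v - z, hz, by simp⟩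
  · rintro ⟨w, hw, hw'⟩
    rw [IsometryEquiv.neg_apply] at hw'
    have : v - z = w := by rw [← neg_sub, ← hw', neg_neg]
    rwa [this]

lemma lf_neg (a b : ℝ) (z : Plane) : lf (-a) (-b) 0 z = lf a b 0 (-z) := by
  simp [lf, cX, cY, neg_div]

/-- Density at a vertex, given two sides and a cone. -/
lemma dens_at {v : Plane} (hv : v ∈ PP) {i j : Fin 5} (hij : ∀ k, sd k v = 0 ↔ k = i ∨ k = j)
    {a b a' b' d : ℝ} (hd : HasDens {z | 0 ≤ lf a b 0 z ∧ 0 ≤ lf a' b' 0 z} 0 d)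
    (h : (cA i = a ∧ cB i = b ∧ cA j = a' ∧ cB j = b') ∨
      (cA i = -a ∧ cB i = -b ∧ cA j = -a' ∧ cB j = -b')) : HasDens PP v d := by
  refine HasDens.congr (S := {z | ∀ k, sd k v = 0 → 0 ≤ sd k z}) ?_ (PP_local hv)
  have hi : sd i v = 0 := (hij i).2 (Or.inl rfl)
  have hj : sd j v = 0 := (hij j).2 (Or.inr rfl)
  have key : ∀ z, (∀ k, sd k v = 0 → 0 ≤ sd k z) ↔ 0 ≤ sd i z ∧ 0 ≤ sd j z := by
    intro z
    refine ⟨fun h => ⟨h i hi, h j hj⟩, fun h k hk => ?_⟩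
    rcases (hij k).1 hk with rfl | rfl
    · exact h.1
    · exact h.2
  rcases h with ⟨e1, e2, e3, e4⟩ | ⟨e1, e2, e3, e4⟩
  · refine hd.translate v fun z => ?_
    simp only [Set.mem_ofPred_eq, key, sd_eq_lf hi, sd_eq_lf hj, e1, e2, e3, e4]
  · refine hd.translate_neg v fun z => ?_
    simp only [Set.mem_ofPred_eq, key, sd_eq_lf hi, sd_eq_lf hj, e1, e2, e3, e4, lf_neg, neg_sub]

/-- The interior angles. -/
def ang : Fin 5 → ℝ := ![Real.pi / 3 + cc, 2 * Real.pi / 3, 2 * Real.pi / 3,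
  2 * Real.pi / 3 - 2 * cc, 2 * Real.pi / 3 + cc]

lemma ang0 : ang 0 = Real.pi / 3 + cc := rfl
lemma ang1 : ang 1 = 2 * Real.pi / 3 := rfl
lemma ang2 : ang 2 = 2 * Real.pi / 3 := rfl
lemma ang3 : ang 3 = 2 * Real.pi / 3 - 2 * cc := rfl
lemma ang4 : ang 4 = 2 * Real.pi / 3 + cc := rfl

lemma HasDens.cast {S : Set Plane} {v : Plane} {d d' : ℝ} (h : HasDens S v d) (e : d' = d) :
    HasDens S v d' := e ▸ h

lemma sd_vt : (∀ k, sd k (vt 0) = 0 ↔ k = 0 ∨ k = 4) ∧ (∀ k, sd k (vt 1) = 0 ↔ k = 1 ∨ k = 0) ∧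
    (∀ k, sd k (vt 2) = 0 ↔ k = 2 ∨ k = 1) ∧ (∀ k, sd k (vt 3) = 0 ↔ k = 3 ∨ k = 2) ∧
    (∀ k, sd k (vt 4) = 0 ↔ k = 4 ∨ k = 3) := by
  refine ⟨?_, ?_, ?_, ?_, ?_⟩ <;> intro k <;> fin_cases k <;>
    (simp [sd, lf, vt, cA, cB, cC, vx, vy]; try norm_num)

lemma dens_vertex (i : Fin 5) : HasDens PP (vt i) (ang i / 2) := by
  obtain ⟨k, hk, hcos, hsin⟩ := cc_trig
  have h0 := cc_pos
  have h1 := cc_lt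
  have hpi := Real.pi_pos
  have hs := s3_sq
  have c3 := Real.cos_pi_div_three
  have s3 := Real.sin_pi_div_three
  obtain ⟨v0, v1, v2, v3, v4⟩ := sd_vt
  have cm : Real.cos (-cc) = k * 5 := by rw [Real.cos_neg, hcos]
  have sm : Real.sin (-cc) = k * (-1 * √3) := by rw [Real.sin_neg, hsin]; ring
  have cd : Real.cos (Real.pi / 3 - cc) = (2 * k) * 2 := by
    rw [Real.cos_sub, c3, s3, hcos, hsin]; linear_combination k / 2 * hs
  have sd' : Real.sin (Real.pi / 3 - cc) = (2 * k) * (1 * √3) := by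
    rw [Real.sin_sub, c3, s3, hcos, hsin]; ring
  have ce : Real.cos (Real.pi / 3 + cc) = k * 1 := by
    rw [Real.cos_add, c3, s3, hcos, hsin]; linear_combination - k / 2 * hs
  have se : Real.sin (Real.pi / 3 + cc) = k * (3 * √3) := by
    rw [Real.sin_add, c3, s3, hcos, hsin]; ring
  fin_cases i
  · have := dens_cone (α := -cc) (β := Real.pi / 3) (u1 := 5) (w1 := -1) (u2 := 1) (w2 := 1)
      (k := k) (l := 1 / 2) hk (by norm_num) (by linarith) (by linarith) (by linarith)
      (by linarith) cm sm (by rw [c3]; ring) (by rw [s3]; ring)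
    have h := dens_at (vt_mem 0) v0 this (Or.inl (by simp [cA, cB]))
    exact h.cast (by change ang 0 / 2 = _; rw [ang0]; ring)
  · have := dens_cone (α := Real.pi / 3 - cc) (β := Real.pi - cc) (u1 := 2) (w1 := 1) (u2 := -5)
      (w2 := 1) (k := 2 * k) (l := k) (by linarith) hk (by linarith) (by linarith) (by linarith)
      (by linarith) cd sd' (by rw [Real.cos_pi_sub, hcos]; ring)
      (by rw [Real.sin_pi_sub, hsin]; ring)
    have h := dens_at (vt_mem 1) v1 this (Or.inl (by simp [cA, cB]))
    exact h.cast (by change ang 1 / 2 = _; rw [ang1]; ring)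
  · have := dens_cone (α := -(Real.pi / 3 + cc)) (β := Real.pi / 3 - cc) (u1 := 1) (w1 := -3)
      (u2 := 2) (w2 := 1) (k := k) (l := 2 * k) hk (by linarith) (by linarith) (by linarith)
      (by linarith) (by linarith) (by rw [Real.cos_neg, ce])
      (by rw [Real.sin_neg, se]; ring) cd sd'
    have h := dens_at (vt_mem 2) v2 this (Or.inr (by simp [cA, cB]))
    exact h.cast (by change ang 2 / 2 = _; rw [ang2]; ring)
  · have := dens_cone (α := cc) (β := Real.pi - (Real.pi / 3 + cc)) (u1 := 5) (w1 := 1)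
      (u2 := -1) (w2 := 3) (k := k) (l := k) hk hk (by linarith) (by linarith)
      (by linarith) (by linarith) hcos (by rw [hsin]; ring)
      (by rw [Real.cos_pi_sub, ce]; ring) (by rw [Real.sin_pi_sub, se])
    have h := dens_at (vt_mem 3) v3 this (Or.inr (by simp [cA, cB]))
    exact h.cast (by change ang 3 / 2 = _; rw [ang3]; ring)
  · have := dens_cone (α := Real.pi / 3 - Real.pi) (β := cc) (u1 := -1) (w1 := -1)
      (u2 := 5) (w2 := 1) (k := 1 / 2) (l := k) (by norm_num) hk (by linarith) (by linarith)
      (by linarith) (by linarith) (by rw [Real.cos_sub_pi, c3]; ring)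
      (by rw [Real.sin_sub_pi, s3]; ring) hcos (by rw [hsin]; ring)
    have h := dens_at (vt_mem 4) v4 this (Or.inl (by simp [cA, cB]))
    exact h.cast (by change ang 4 / 2 = _; rw [ang4]; ring)

lemma two_zero {z : Plane} (hz : z ∈ PP) {i j : Fin 5} (hij : i ≠ j) (hi : sd i z = 0)
    (hj : sd j z = 0) : ∃ k, z = vt k := by
  rw [mem_PP_iff] at hz
  obtain ⟨h0, h1, h2, h3, h4⟩ := hz
  have fin : ∀ k, cX z = vx k → cY z = vy k → ∃ k, z = vt k := fun k ha hb =>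
    ⟨k, ext_co (by simpa [vt] using ha) (by simpa [vt] using hb)⟩
  have f0 := fin 0
  have f1 := fin 1
  have f2 := fin 2
  have f3 := fin 3
  have f4 := fin 4
  simp [vx, vy] at f0 f1 f2 f3 f4
  clear fin
  fin_cases i <;> fin_cases j <;> first
    | exact absurd rfl hij
    | (simp [sd0, sd1, sd2, sd3, sd4] at hi hj
       first
        | (exfalso; linarith)
        | exact f0 (by linarith) (by linarith)
        | exact f1 (by linarith) (by linarith)
        | exact f2 (by linarith) (by linarith)
        | exact f3 (by linarith) (by linarith)
        | exact f4 (by linarith) (by linarith))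

lemma dens_PP (z : Plane) (hz : z ∈ PP) : ∃ d, HasDens PP z d ∧
    ((∃ i, z = vt i ∧ d = ang i / 2) ∨ ((∀ i, z ≠ vt i) ∧ (d = Real.pi / 2 ∨ d = Real.pi))) := by
  by_cases hv : ∃ i, z = vt i
  · obtain ⟨i, rfl⟩ := hv
    exact ⟨_, dens_vertex i, Or.inl ⟨i, rfl, rfl⟩⟩
  have hv' : ∀ i, z ≠ vt i := fun i h => hv ⟨i, h⟩
  by_cases h0 : ∃ i, sd i z = 0
  · obtain ⟨i, hi⟩ := h0
    refine ⟨Real.pi / 2, ?_, Or.inr ⟨hv', Or.inl rfl⟩⟩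
    refine HasDens.congr ?_ (PP_local hz)
    refine (dens_half (cAB_ne i)).translate z fun w => ?_
    simp only [Set.mem_ofPred_eq, ← sd_eq_lf hi]
    refine ⟨fun h => h i hi, fun h j hj => ?_⟩
    by_cases hij : i = j
    · exact hij ▸ h
    · exact absurd (two_zero hz hij hi hj) hv
  · refine ⟨Real.pi, ?_, Or.inr ⟨hv', Or.inr rfl⟩⟩
    push Not at h0
    refine HasDens.congr (dens_univ z) ?_
    filter_upwards [PP_local hz] with w hw
    rw [← hw]
    simp [h0]

/-! ## The pentagon is asymmetric -/

open MeasureTheory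

lemma HasDens.eventually {S : Set Plane} {v : Plane} {d : ℝ} (h : HasDens S v d) :
    ∀ᶠ r in nhdsWithin (0 : ℝ) (Set.Ioi 0),
      volume (S ∩ Metric.ball v r) = ENNReal.ofReal (d * r ^ 2) := by
  obtain ⟨R, hR, h⟩ := h
  filter_upwards [Ioo_mem_nhdsGT hR] with r hr using h r hr.1 hr.2

lemma HasDens.unique {S : Set Plane} {v : Plane} {d d' : ℝ} (h : HasDens S v d)
    (h' : HasDens S v d') (hd : 0 ≤ d) (hd' : 0 ≤ d') : d = d' := by
  obtain ⟨r, ⟨h1, h2⟩, hr⟩ :=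
    ((h.eventually.and h'.eventually).and self_mem_nhdsWithin).exists
  rw [h1, ENNReal.ofReal_eq_ofReal_iff (by positivity) (by positivity)] at h2
  have hr : 0 < r ^ 2 := pow_pos hr 2
  exact mul_right_cancel₀ hr.ne' h2

lemma ang_nonneg (i : Fin 5) : 0 ≤ ang i / 2 := by
  have h0 := cc_pos
  have h1 := cc_lt
  revert i
  rw [forall5, ang0, ang1, ang2, ang3, ang4]
  refine ⟨?_, ?_, ?_, ?_, ?_⟩ <;> linarith

lemma exists5 {p : Fin 5 → Prop} : (∃ i, p i) ↔ p 0 ∨ p 1 ∨ p 2 ∨ p 3 ∨ p 4 := by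
  constructor
  · rintro ⟨i, hi⟩
    fin_cases i
    · exact Or.inl hi
    · exact Or.inr (Or.inl hi)
    · exact Or.inr (Or.inr (Or.inl hi))
    · exact Or.inr (Or.inr (Or.inr (Or.inl hi)))
    · exact Or.inr (Or.inr (Or.inr (Or.inr hi)))
  · rintro (h | h | h | h | h) <;> exact ⟨_, h⟩

lemma dens_cases {z : Plane} (hz : z ∈ PP) {d : ℝ} (hd : HasDens PP z d) (hd0 : 0 ≤ d) :
    (z = vt 0 ∧ d = Real.pi / 6 + cc / 2) ∨ (z = vt 1 ∧ d = Real.pi / 3) ∨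
    (z = vt 2 ∧ d = Real.pi / 3) ∨ (z = vt 3 ∧ d = Real.pi / 3 - cc) ∨
    (z = vt 4 ∧ d = Real.pi / 3 + cc / 2) ∨ d = Real.pi / 2 ∨ d = Real.pi := by
  have hpi := Real.pi_pos
  obtain ⟨d', hd', h⟩ := dens_PP z hz
  rw [exists5, ang0, ang1, ang2, ang3, ang4] at h
  have hd0' : 0 ≤ d' := by
    have h0 := cc_pos
    have h1 := cc_lt
    rcases h with (h | h | h | h | h) | ⟨_, h | h⟩ <;> linarith
  have := hd.unique hd' hd0 hd0'
  subst this
  rcases h with (h | h | h | h | h) | ⟨_, h | h⟩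
  · exact Or.inl ⟨h.1, by linarith⟩
  · exact Or.inr (Or.inl ⟨h.1, by linarith⟩)
  · exact Or.inr (Or.inr (Or.inl ⟨h.1, by linarith⟩))
  · exact Or.inr (Or.inr (Or.inr (Or.inl ⟨h.1, by linarith⟩)))
  · exact Or.inr (Or.inr (Or.inr (Or.inr (Or.inl ⟨h.1, by linarith⟩))))
  · exact Or.inr (Or.inr (Or.inr (Or.inr (Or.inr (Or.inl h)))))
  · exact Or.inr (Or.inr (Or.inr (Or.inr (Or.inr (Or.inr h)))))

lemma pent_asymm {g : Plane ≃ᵢ Plane} (hg : g '' PP = PP) (z : Plane) : g z = z := by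
  have hpi := Real.pi_pos
  have h0 := cc_pos
  have h1 := cc_lt
  have hm : ∀ i, g (vt i) ∈ PP := fun i => by
    rw [← hg]; exact Set.mem_image_of_mem _ (vt_mem i)
  have hd : ∀ i, HasDens PP (g (vt i)) (ang i / 2) := fun i => by
    have := (dens_vertex i).image g
    rwa [hg] at this
  have hdist : ∀ z w, (cX (g z) - cX (g w)) ^ 2 + 3 * (cY (g z) - cY (g w)) ^ 2 =
      (cX z - cX w) ^ 2 + 3 * (cY z - cY w) ^ 2 := fun z w => by
    rw [← dist_sq_co, ← dist_sq_co, g.dist_eq]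
  have g4 : g (vt 4) = vt 4 := by
    have hc := dens_cases (hm 4) (hd 4) (ang_nonneg 4)
    rw [ang4] at hc
    rcases hc with h | h | h | h | h | h | h
    · linarith [h.2]
    · linarith [h.2]
    · linarith [h.2]
    · linarith [h.2]
    · exact h.1
    · linarith
    · linarith
  have g1 : g (vt 1) = vt 1 := by
    have hc := dens_cases (hm 1) (hd 1) (ang_nonneg 1)
    rw [ang1] at hc
    rcases hc with h | h | h | h | h | h | h
    · linarith [h.2]
    · exact h.1
    · have := hdist (vt 1) (vt 4)
      rw [h.1, g4] at this
      simp [vt, vx, vy] at this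
      norm_num at this
    · linarith [h.2]
    · linarith [h.2]
    · linarith
    · linarith
  have g2 : g (vt 2) = vt 2 := by
    have hc := dens_cases (hm 2) (hd 2) (ang_nonneg 2)
    rw [ang2] at hc
    rcases hc with h | h | h | h | h | h | h
    · linarith [h.2]
    · have := hdist (vt 2) (vt 4)
      rw [h.1, g4] at this
      simp [vt, vx, vy] at this
      norm_num at this
    · exact h.1
    · linarith [h.2]
    · linarith [h.2]
    · linarith
    · linarith
  have d1 := hdist z (vt 1)
  have d2 := hdist z (vt 2)
  have d4 := hdist z (vt 4)
  rw [g1] at d1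
  rw [g2] at d2
  rw [g4] at d4
  simp [vt, vx, vy] at d1 d2 d4
  apply ext_co <;> linarith

lemma isom_eq {g h : Plane ≃ᵢ Plane} (e : g '' PP = h '' PP) : g = h := by
  ext1 z
  have := pent_asymm (g := g.trans h.symm) (by
    have hco : (⇑(g.trans h.symm) : Plane → Plane) = h.symm ∘ g := rfl
    have hco' : (⇑h.symm ∘ ⇑h : Plane → Plane) = id := by ext; simp
    rw [hco, Set.image_comp, e, ← Set.image_comp, hco', Set.image_id]) z
  simp only [IsometryEquiv.trans_apply] at this
  have := congrArg h this
  simpa using this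

/-! ## Angle sums in a tiling -/

lemma PP_compact : IsCompact PP := by
  rw [← hull_eq]
  exact (Set.finite_range vt).isCompact_convexHull ℝ

lemma PP_pos : 0 < volume PP := by
  obtain ⟨r, h, hr⟩ := ((dens_vertex 1).eventually.and self_mem_nhdsWithin).exists
  have hr : 0 < r ^ 2 := pow_pos hr 2
  refine lt_of_lt_of_le ?_ (measure_mono (Set.inter_subset_left (t := Metric.ball (vt 1) r)))
  rw [h, ENNReal.ofReal_pos, ang1]
  have := Real.pi_pos
  positivity

lemma tile_sum {T : Set (Set Plane)} (hT : IsMonohedralTiling PP T) (v : Plane) :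
    ∃ F : Finset (Set Plane), (∀ t, t ∈ F ↔ t ∈ T ∧ v ∈ t) ∧
      ∀ d : Set Plane → ℝ, (∀ t ∈ F, HasDens t v (d t) ∧ 0 ≤ d t) →
        ∑ t ∈ F, d t = Real.pi := by
  obtain ⟨hcopy, hcov, hdisj⟩ := hT
  have hclosed : ∀ t ∈ T, IsClosed t := by
    intro t ht
    obtain ⟨g, rfl⟩ := hcopy t ht
    exact g.toHomeomorph.isClosedMap _ PP_closed
  have hvol : ∀ t ∈ T, volume t = volume PP := by
    intro t ht
    obtain ⟨g, rfl⟩ := hcopy t ht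
    exact vol_image g PP
  have hfr : ∀ t ∈ T, volume (frontier t) = 0 := by
    intro t ht
    obtain ⟨g, rfl⟩ := hcopy t ht
    have := g.toHomeomorph.image_frontier PP
    rw [IsometryEquiv.coe_toHomeomorph] at this
    rw [← this, vol_image]
    exact PP_convex.addHaar_frontier _
  have had : ∀ t ∈ T, ∀ s ∈ T, t ≠ s → volume (t ∩ s) = 0 := by
    intro t ht s hs hts
    refine measure_mono_null (t := frontier t ∪ frontier s) ?_
      (measure_union_null (hfr t ht) (hfr s hs))
    rintro z ⟨hzt, hzs⟩
    by_contra hz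
    rw [Set.mem_union, not_or] at hz
    have i1 : z ∈ interior t := by
      by_contra h; exact hz.1 ⟨subset_closure hzt, h⟩
    have i2 : z ∈ interior s := by
      by_contra h; exact hz.2 ⟨subset_closure hzs, h⟩
    have := hdisj ht hs hts
    exact (Set.mem_empty_iff_false z).1 (this ▸ ⟨i1, i2⟩)
  obtain ⟨D, hD⟩ := Metric.isBounded_iff.1 PP_compact.isBounded
  have hDt : ∀ t ∈ T, ∀ x ∈ t, ∀ y ∈ t, dist x y ≤ D := by
    intro t ht
    obtain ⟨g, rfl⟩ := hcopy t ht
    rintro _ ⟨x, hx, rfl⟩ _ ⟨y, hy, rfl⟩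
    rw [g.dist_eq]
    exact hD hx hy
  set N : Set (Set Plane) := {t | t ∈ T ∧ (t ∩ Metric.ball v 1).Nonempty} with hN
  have hNT : ∀ t ∈ N, t ∈ T := fun t ht => by
    rw [hN, Set.mem_ofPred_eq] at ht; exact ht.1
  have hNfin : N.Finite := by
    have h := Measure.finite_const_le_meas_of_disjoint_iUnion₀ (volume : Measure Plane)
      (ε := volume PP) PP_pos (As := fun t : N => (t : Set Plane))
      (fun t => (hclosed _ (hNT _ t.2)).measurableSet.nullMeasurableSet)
      (fun t s hts => had _ (hNT _ t.2) _ (hNT _ s.2) (fun h => hts (Subtype.ext h)))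
      (by
        refine measure_ne_top_of_subset (s := Metric.ball v (1 + D + 1)) ?_
          (measure_ball_lt_top (μ := (volume : Measure Plane))).ne
        apply Set.iUnion_subset
        rintro ⟨t, ht⟩ z hz
        rw [hN, Set.mem_ofPred_eq] at ht
        obtain ⟨htT, w, hw, hwb⟩ := ht
        have h1 := hDt t htT z hz w hw
        rw [Metric.mem_ball] at hwb ⊢
        linarith [dist_triangle z w v])
    have h2 : {t : N | volume PP ≤ volume (t : Set Plane)} = Set.univ := by
      ext t; simp [hvol _ (hNT _ t.2)]
    rw [h2] at h
    exact Set.finite_coe_iff.1 (Set.finite_univ_iff.1 h)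
  classical
  refine ⟨hNfin.toFinset.filter (fun t => v ∈ t), ?_, ?_⟩
  · intro t
    simp only [Finset.mem_filter, Set.Finite.mem_toFinset, hN, Set.mem_ofPred_eq]
    constructor
    · rintro ⟨⟨h1, _⟩, h2⟩; exact ⟨h1, h2⟩
    · rintro ⟨h1, h2⟩; exact ⟨⟨h1, v, h2, Metric.mem_ball_self one_pos⟩, h2⟩
  intro d hd
  set F := hNfin.toFinset.filter (fun t => v ∈ t) with hF
  have hFT : ∀ t ∈ F, t ∈ T := by
    intro t ht
    rw [hF, Finset.mem_filter, Set.Finite.mem_toFinset] at ht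
    exact hNT t ht.1
  have hfar : ∀ᶠ z in nhds v, ∀ t ∈ N, v ∉ t → z ∉ t := by
    rw [Filter.eventually_all_finite hNfin]
    intro t ht
    by_cases hvt : v ∈ t
    · simp [hvt]
    · filter_upwards [(hclosed t (hNT t ht)).isOpen_compl.mem_nhds hvt] with z hz _ using hz
  obtain ⟨ε, hε, hb⟩ := Metric.eventually_nhds_iff.1 hfar
  have hev : ∀ᶠ r in nhdsWithin (0 : ℝ) (Set.Ioi 0), ∀ t ∈ F,
      volume (t ∩ Metric.ball v r) = ENNReal.ofReal (d t * r ^ 2) := by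
    rw [Filter.eventually_all_finset]
    intro t ht
    exact (hd t ht).1.eventually
  obtain ⟨r, ⟨⟨h1, h2⟩, h3⟩, hr⟩ := (((hev.and (dens_univ v).eventually).and
    (Ioo_mem_nhdsGT (lt_min one_pos hε))).and self_mem_nhdsWithin).exists
  have hr : 0 < r := hr
  have hun : Set.univ ∩ Metric.ball v r = ⋃ t ∈ F, t ∩ Metric.ball v r := by
    ext z
    simp only [Set.univ_inter, Set.mem_iUnion, Set.mem_inter_iff, exists_prop]
    constructor
    · intro hz
      have hzu : z ∈ ⋃₀ T := by rw [hcov]; trivial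
      obtain ⟨t, ht, hzt⟩ := hzu
      rw [Metric.mem_ball] at hz
      have hz1 : dist z v < 1 := hz.trans (h3.2.trans_le (min_le_left _ _))
      have hz2 : dist z v < ε := hz.trans (h3.2.trans_le (min_le_right _ _))
      have htN : t ∈ N := by
        rw [hN, Set.mem_ofPred_eq]
        exact ⟨ht, z, hzt, hz1⟩
      refine ⟨t, ?_, hzt, hz⟩
      rw [hF, Finset.mem_filter, Set.Finite.mem_toFinset]
      refine ⟨htN, ?_⟩
      by_contra hvt
      exact hb hz2 t htN hvt hzt
    · rintro ⟨t, _, _, hz⟩; exact hz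
  rw [hun, measure_biUnion_finset₀, Finset.sum_congr rfl h1,
    ← ENNReal.ofReal_sum_of_nonneg, ← Finset.sum_mul,
    ENNReal.ofReal_eq_ofReal_iff] at h2
  · exact mul_right_cancel₀ (pow_pos hr 2).ne' h2
  · exact mul_nonneg (Finset.sum_nonneg fun t ht => (hd t ht).2) (by positivity)
  · have := Real.pi_pos
    positivity
  · intro t ht
    exact mul_nonneg (hd t ht).2 (by positivity)
  · intro t ht s hs hts
    refine measure_mono_null ?_ (had t (hFT t ht) s (hFT s hs) hts)
    rintro z ⟨ha, hb⟩
    exact ⟨ha.1, hb.1⟩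
  · intro t ht
    exact ((hclosed t (hFT t ht)).measurableSet.inter measurableSet_ball).nullMeasurableSet

/-! ## No isohedral tiling -/

lemma vt_inj : Function.Injective vt := by
  intro i j hij
  have hx := congrArg cX hij
  simp only [vt, cX_pt] at hx
  revert hx
  fin_cases i <;> fin_cases j <;> simp [vx]

/-- The numerical contradiction. -/
lemma numeric (X : Finset Plane) (f : Plane → ℝ) (m : ℕ)
    (hf : ∀ x ∈ X, (∃ i, x = vt i ∧ f x = ang i / 2) ∨
      ((∀ i, x ≠ vt i) ∧ (f x = Real.pi / 2 ∨ f x = Real.pi)))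
    (h4 : vt 4 ∈ X) (hsum : (m : ℝ) * ∑ x ∈ X, f x = Real.pi) : False := by
  classical
  have hpi := Real.pi_pos
  have h0 := cc_pos
  have h1 := cc_lt
  have hfv : ∀ i, vt i ∈ X → f (vt i) = ang i / 2 := by
    intro i hi
    rcases hf _ hi with ⟨j, hj, h⟩ | ⟨h, _⟩
    · rw [h, vt_inj hj]
    · exact absurd rfl (h i)
  have hV : ∑ x ∈ X with (∃ i, x = vt i), f x = ∑ i : Fin 5, if vt i ∈ X then ang i / 2 else 0 := by
    rw [← Finset.sum_filter]
    symm
    refine Finset.sum_bij (fun i _ => vt i) ?_ ?_ ?_ ?_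
    · intro i hi
      rw [Finset.mem_filter] at hi ⊢
      exact ⟨hi.2, i, rfl⟩
    · intro i _ j _ hij; exact vt_inj hij
    · intro x hx
      rw [Finset.mem_filter] at hx
      obtain ⟨hx, i, rfl⟩ := hx
      exact ⟨i, by simp [hx], rfl⟩
    · intro i hi
      rw [Finset.mem_filter] at hi
      exact (hfv i hi.2).symm
  set Y := X.filter (fun x => ¬ ∃ i, x = vt i) with hY
  have hYf : ∀ x ∈ Y, f x = Real.pi / 2 ∨ f x = Real.pi := by
    intro x hx
    rw [hY, Finset.mem_filter] at hx
    rcases hf x hx.1 with ⟨i, h, _⟩ | ⟨_, h⟩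
    · exact absurd ⟨i, h⟩ hx.2
    · exact h
  have hR : ∑ x ∈ Y, f x = 0 ∨ ∑ x ∈ Y, f x = Real.pi / 2 ∨ Real.pi ≤ ∑ x ∈ Y, f x := by
    rcases Y.eq_empty_or_nonempty with h | ⟨y, hy⟩
    · left; rw [h]; simp
    right
    rw [← Finset.add_sum_erase Y f hy]
    rcases (Y.erase y).eq_empty_or_nonempty with h | ⟨y', hy'⟩
    · rw [h, Finset.sum_empty, add_zero]
      rcases hYf y hy with h | h
      · left; exact h
      · right; exact h.ge
    · right
      have hge : ∀ x ∈ Y, Real.pi / 2 ≤ f x := by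
        intro x hx
        rcases hYf x hx with h | h <;> rw [h] <;> linarith
      have hs := Finset.single_le_sum (f := f) (s := Y.erase y)
        (fun x hx => by linarith [hge x (Finset.mem_of_mem_erase hx)]) hy'
      linarith [hge y hy, hge y' (Finset.mem_of_mem_erase hy')]
  have hsplit := Finset.sum_filter_add_sum_filter_not X (fun x => ∃ i, x = vt i) f
  rw [hV, ← hY, Fin.sum_univ_five, if_pos h4, ang0, ang1, ang2, ang3, ang4] at hsplit
  set S := ∑ x ∈ X, f x with hS
  set R := ∑ x ∈ Y, f x with hRd
  have e0 : (if vt 0 ∈ X then (Real.pi / 3 + cc) / 2 else 0) = 0 ∨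
      (if vt 0 ∈ X then (Real.pi / 3 + cc) / 2 else 0) = (Real.pi / 3 + cc) / 2 := by
    split_ifs <;> simp
  have e1 : (if vt 1 ∈ X then (2 * Real.pi / 3) / 2 else 0) = 0 ∨
      (if vt 1 ∈ X then (2 * Real.pi / 3) / 2 else 0) = (2 * Real.pi / 3) / 2 := by
    split_ifs <;> simp
  have e2 : (if vt 2 ∈ X then (2 * Real.pi / 3) / 2 else 0) = 0 ∨
      (if vt 2 ∈ X then (2 * Real.pi / 3) / 2 else 0) = (2 * Real.pi / 3) / 2 := by
    split_ifs <;> simp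
  have e3 : (if vt 3 ∈ X then (2 * Real.pi / 3 - 2 * cc) / 2 else 0) = 0 ∨
      (if vt 3 ∈ X then (2 * Real.pi / 3 - 2 * cc) / 2 else 0) = (2 * Real.pi / 3 - 2 * cc) / 2 := by
    split_ifs <;> simp
  generalize (if vt 0 ∈ X then (Real.pi / 3 + cc) / 2 else 0) = a0 at *
  generalize (if vt 1 ∈ X then (2 * Real.pi / 3) / 2 else 0) = a1 at *
  generalize (if vt 2 ∈ X then (2 * Real.pi / 3) / 2 else 0) = a2 at *
  generalize (if vt 3 ∈ X then (2 * Real.pi / 3 - 2 * cc) / 2 else 0) = a3 at *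
  clear hf h4 hfv hV hYf
  have hS3 : Real.pi / 3 < S := by
    rcases e0 with e0 | e0 <;> rcases e1 with e1 | e1 <;> rcases e2 with e2 | e2 <;>
      rcases e3 with e3 | e3 <;> rcases hR with hR | hR | hR <;> linarith
  have hm : m < 3 := by
    by_contra h
    push Not at h
    have h' : (3 : ℝ) ≤ m := by exact_mod_cast h
    nlinarith
  interval_cases m
  · norm_num at hsum; linarith
  · norm_num at hsum
    rcases e0 with e0 | e0 <;> rcases e1 with e1 | e1 <;> rcases e2 with e2 | e2 <;>
      rcases e3 with e3 | e3 <;> rcases hR with hR | hR | hR <;> linarith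
  · norm_num at hsum
    rcases e0 with e0 | e0 <;> rcases e1 with e1 | e1 <;> rcases e2 with e2 | e2 <;>
      rcases e3 with e3 | e3 <;> rcases hR with hR | hR | hR <;> linarith

theorem no_isohedral :
    ¬ ∃ T : Set (Set Plane), IsMonohedralTiling pent.carrier T ∧ IsIsohedral T := by
  classical
  rw [pent_carrier]
  rintro ⟨T, hT, hI⟩
  have hcopy : ∀ t ∈ T, ∃ g : Plane ≃ᵢ Plane, t = g '' PP := hT.1
  choose! h hh using hcopy
  obtain ⟨t0, ht0⟩ : T.Nonempty := by
    have : (0 : Plane) ∈ ⋃₀ T := by rw [hT.2.1]; trivial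
    obtain ⟨t, ht, _⟩ := this
    exact ⟨t, ht⟩
  set v := h t0 (vt 4) with hv
  obtain ⟨F, hF, hsum⟩ := tile_sum hT v
  choose! f hf1 hf2 using dens_PP
  set τ : Set Plane → Plane := fun t => (h t).symm v with hτ
  have hτP : ∀ t ∈ F, τ t ∈ PP := by
    intro t ht
    obtain ⟨htT, hvt⟩ := (hF t).1 ht
    rw [hh t htT] at hvt
    obtain ⟨x, hx, hxv⟩ := hvt
    simpa [hτ, ← hxv] using hx
  have hhτ : ∀ t, h t (τ t) = v := fun t => by simp [hτ]
  have hfn : ∀ x ∈ PP, 0 ≤ f x := by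
    intro x hx
    have hpi := Real.pi_pos
    rcases hf2 x hx with ⟨i, _, e⟩ | ⟨_, e | e⟩
    · rw [e]; exact ang_nonneg i
    · rw [e]; positivity
    · rw [e]; positivity
  have htot := hsum (fun t => f (τ t)) (by
    intro t ht
    refine ⟨?_, hfn _ (hτP t ht)⟩
    have := (hf1 _ (hτP t ht)).image (h t)
    rwa [← hh t ((hF t).1 ht).1, hhτ] at this)
  -- equal multiplicities
  have hle : ∀ s0 ∈ F, ∀ s1 ∈ F, (F.filter (fun t => τ t = τ s0)).card ≤
      (F.filter (fun t => τ t = τ s1)).card := by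
    intro s0 hs0 s1 hs1
    have hs0T := ((hF s0).1 hs0).1
    have hs1T := ((hF s1).1 hs1).1
    have hg : ∀ t ∈ T, ∃ g : Plane ≃ᵢ Plane, IsSymmetryOf g T ∧ g '' s0 = t :=
      fun t ht => hI s0 hs0T t ht
    choose! g hg1 hg2 using hg
    have htrans : ∀ a b : Plane ≃ᵢ Plane, (⇑(a.trans b) : Plane → Plane) = b ∘ a :=
      fun _ _ => rfl
    have hgh : ∀ t ∈ T, ∀ z, g t (h s0 z) = h t z := by
      intro t ht z
      have : (h s0).trans (g t) = h t := by
        apply isom_eq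
        rw [htrans, Set.image_comp, ← hh s0 hs0T, hg2 t ht, ← hh t ht]
      rw [← this]; rfl
    refine Finset.card_le_card_of_injOn (fun t => g t '' s1) ?_ ?_
    · intro t ht
      simp only [Finset.coe_filter, Set.mem_ofPred_eq] at ht ⊢
      obtain ⟨htF, htτ⟩ := ht
      have htT := ((hF t).1 htF).1
      have hgv : g t v = v := by
        rw [← hhτ s0, hgh t htT, ← htτ, hhτ, htτ, hhτ]
      have hmT : g t '' s1 ∈ T := by
        have := hg1 t htT
        unfold IsSymmetryOf at this
        rw [← this]
        exact ⟨s1, hs1T, rfl⟩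
      refine ⟨(hF _).2 ⟨hmT, v, ((hF s1).1 hs1).2, hgv⟩, ?_⟩
      have he : (h s1).trans (g t) = h (g t '' s1) := by
        apply isom_eq
        rw [← hh _ hmT, htrans, Set.image_comp, ← hh s1 hs1T]
      simp only [hτ]
      rw [IsometryEquiv.symm_apply_eq, ← he, IsometryEquiv.trans_apply,
        IsometryEquiv.apply_symm_apply, hgv]
    · intro t ht t' ht' hEq
      simp only [Finset.coe_filter, Set.mem_ofPred_eq] at ht ht'
      have htT := ((hF t).1 ht.1).1
      have htT' := ((hF t').1 ht'.1).1
      have hEq : g t '' s1 = g t' '' s1 := hEq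
      have he : (h s1).trans (g t) = (h s1).trans (g t') := by
        apply isom_eq
        rw [htrans, htrans, Set.image_comp, Set.image_comp, ← hh s1 hs1T, hEq]
      have he' : g t = g t' := by
        ext1 z
        have := congrArg (fun k : Plane ≃ᵢ Plane => k ((h s1).symm z)) he
        simpa using this
      rw [← hg2 t htT, he', hg2 t' htT']
  have ht0F : t0 ∈ F := (hF t0).2 ⟨ht0, by
    have : v ∈ h t0 '' PP := Set.mem_image_of_mem _ (vt_mem 4)
    rwa [← hh t0 ht0] at this⟩
  have hτ0 : τ t0 = vt 4 := by simp [hτ, hv]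
  rw [Finset.sum_comp f τ] at htot
  have hcard : ∀ x ∈ F.image τ, (F.filter (fun t => τ t = x)).card • f x =
      ((F.filter (fun t => τ t = τ t0)).card : ℝ) * f x := by
    intro x hx
    rw [Finset.mem_image] at hx
    obtain ⟨s, hs, rfl⟩ := hx
    rw [nsmul_eq_mul, le_antisymm (hle s hs t0 ht0F) (hle t0 ht0F s hs)]
  rw [Finset.sum_congr rfl hcard, ← Finset.mul_sum] at htot
  refine numeric (F.image τ) f _ ?_ ?_ htot
  · intro x hx
    rw [Finset.mem_image] at hx
    obtain ⟨s, hs, rfl⟩ := hx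
    exact hf2 _ (hτP s hs)
  · rw [← hτ0]
    exact Finset.mem_image_of_mem _ ht0F

/-- there exists a convex pentagon that is an anisohedral tile:
it admits a monohedral tiling of the plane but no isohedral one. -/
theorem statement_18 :
    ∃ P : ConvexPentagon,
      (∃ T : Set (Set Plane), IsMonohedralTiling P.carrier T) ∧
      ¬ ∃ T : Set (Set Plane), IsMonohedralTiling P.carrier T ∧ IsIsohedral T := by
  exact ⟨pent, exists_tiling, no_isohedral⟩
end
end

section
/- No convex polygon with at least seven vertices admits a monohedral tiling of the Euclidean plane. -/
open EuclideanGeometry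

noncomputable section

/-! ### Local geometry of convex sets in the plane -/

open Filter Topology in
/-- The ray from `x` in direction `d` immediately enters the interior of `t`. -/
def Enters (t : Set Plane) (x d : Plane) : Prop :=
  ∀ᶠ e : ℝ in 𝓝[>] 0, x + e • d ∈ interior t

open Filter Topology in
lemma enters_of_pos {t : Set Plane} (hc : Convex ℝ t) {x d : Plane} (hx : x ∈ t) {c : ℝ}
    (hcpos : 0 < c) (hy : x + c • d ∈ interior t) : Enters t x d := by
  have h : Set.Ioo (0:ℝ) c ∈ 𝓝[>] (0:ℝ) := Ioo_mem_nhdsGT hcpos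
  filter_upwards [h] with e he
  apply hc.openSegment_self_interior_subset_interior hx hy
  refine ⟨1 - e / c, e / c, ?_, div_pos he.1 hcpos, by ring, ?_⟩
  · have : e / c < 1 := (div_lt_one hcpos).2 he.2
    linarith
  · have : e / c * c = e := div_mul_cancel₀ _ hcpos.ne'
    rw [smul_add, smul_smul, this, ← add_assoc, ← add_smul]
    simp

open Filter Topology in
lemma enters_of_interior {t : Set Plane} {x : Plane} (d : Plane) (hx : x ∈ interior t) :
    Enters t x d := by
  have h : Tendsto (fun e : ℝ => x + e • d) (𝓝[>] 0) (𝓝 x) := by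
    have : Continuous (fun e : ℝ => x + e • d) := by fun_prop
    have h0 := this.tendsto 0
    simp only [zero_smul, add_zero] at h0
    exact h0.mono_left nhdsWithin_le_nhds
  exact h (isOpen_interior.mem_nhds hx)

lemma not_enters_both {t s : Set Plane} (h : interior t ∩ interior s = ∅) {x d : Plane}
    (ht : Enters t x d) (hs : Enters s x d) : False := by
  obtain ⟨e, he⟩ := (ht.and hs).exists
  have : x + e • d ∈ interior t ∩ interior s := he
  rw [h] at this
  exact this

lemma subset_closure_interior {t : Set Plane} (hc : Convex ℝ t) (hi : (interior t).Nonempty) :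
    t ⊆ closure (interior t) := by
  rw [hc.closure_interior_eq_closure_of_nonempty_interior hi]
  exact subset_closure

lemma extremal_of_not_enters {t : Set Plane} (hc : Convex ℝ t) (hi : (interior t).Nonempty)
    (f : Plane →ₗ[ℝ] ℝ) {u : Plane} (hu : ∀ y, f y = 0 → ∃ c : ℝ, y = c • u)
    {x : Plane} (hx : x ∈ t) (h1 : ¬ Enters t x u) (h2 : ¬ Enters t x (-u)) :
    (∀ y ∈ t, f x ≤ f y) ∨ (∀ y ∈ t, f y ≤ f x) := by
  have hf : Continuous f := f.continuous_of_finiteDimensional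
  have hne : ∀ y ∈ interior t, f y ≠ f x := by
    intro y hy hyx
    obtain ⟨c, hcu⟩ := hu (y - x) (by rw [map_sub, hyx, sub_self])
    have hy' : y = x + c • u := by rw [← hcu]; abel
    rcases lt_trichotomy c 0 with h | h | h
    · refine h2 (enters_of_pos hc hx (neg_pos.2 h) ?_)
      rw [smul_neg, neg_smul, neg_neg, ← hy']; exact hy
    · subst h
      rw [zero_smul, add_zero] at hy'
      exact h1 (enters_of_interior _ (hy' ▸ hy))
    · exact h1 (enters_of_pos hc hx h (hy' ▸ hy))
  have hcl := subset_closure_interior hc hi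
  by_cases hlow : ∃ y ∈ interior t, f y < f x
  · right
    obtain ⟨y, hy, hyx⟩ := hlow
    have key : ∀ z ∈ interior t, f z ≤ f x := by
      intro z hz
      by_contra hzx
      push Not at hzx
      obtain ⟨w, hw, hwx⟩ := hc.interior.isPreconnected.intermediate_value hy hz
        hf.continuousOn ⟨hyx.le, hzx.le⟩
      exact hne w hw hwx
    intro z hz
    exact closure_minimal (t := {z | f z ≤ f x}) key (isClosed_le hf continuous_const) (hcl hz)
  · left
    push Not at hlow
    intro z hz
    exact closure_minimal (t := {z | f x ≤ f z}) hlow (isClosed_le continuous_const hf) (hcl hz)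

lemma mem_of_minimal {S : Finset Plane} (f : Plane →ₗ[ℝ] ℝ) (hinj : Set.InjOn f S)
    {x : Plane} (hx : x ∈ convexHull ℝ (S : Set Plane))
    (hmin : ∀ y ∈ convexHull ℝ (S : Set Plane), f x ≤ f y) : x ∈ S := by
  have hS : S.Nonempty := by
    rw [← Finset.coe_nonempty, ← convexHull_nonempty_iff (𝕜 := ℝ)]
    exact ⟨x, hx⟩
  obtain ⟨v, hv, hvmin⟩ := S.exists_min_image f hS
  have hconv : Convex ℝ {y | f v < f y ∨ y = v} := by
    rw [convex_iff_forall_pos]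
    rintro y hy z hz a b ha hb hab
    have hb' : b = 1 - a := by linarith
    simp only [Set.mem_ofPred_eq, map_add, map_smul, smul_eq_mul] at *
    rcases hy with hy | rfl
    · left
      have hz' : f v ≤ f z := by
        rcases hz with hz | rfl
        · exact hz.le
        · exact le_rfl
      subst hb'
      nlinarith
    · rcases hz with hz | rfl
      · left; subst hb'; nlinarith
      · right; rw [← add_smul, hab, one_smul]
  have hsub : convexHull ℝ (S : Set Plane) ⊆ {y | f v < f y ∨ y = v} := by
    apply convexHull_min _ hconv
    intro y hy
    rcases (hvmin y hy).lt_or_eq with h | h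
    · exact Or.inl h
    · exact Or.inr (hinj hy hv h.symm)
  rcases hsub hx with h | h
  · exact absurd (hmin v (subset_convexHull ℝ _ hv)) (not_le.2 h)
  · exact h ▸ hv

lemma mem_of_maximal {S : Finset Plane} (f : Plane →ₗ[ℝ] ℝ) (hinj : Set.InjOn f S)
    {x : Plane} (hx : x ∈ convexHull ℝ (S : Set Plane))
    (hmax : ∀ y ∈ convexHull ℝ (S : Set Plane), f y ≤ f x) : x ∈ S := by
  apply mem_of_minimal (-f) _ hx
  · intro y hy
    simpa using hmax y hy
  · intro a ha b hb hab
    exact hinj ha hb (by simpa using hab)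

open Classical in
/-- Number of directions `u`, `-u` that enter `t` from `x`. -/
def chi (u : Plane) (t : Set Plane) (x : Plane) : ℝ :=
  (if Enters t x u then 1 else 0) + (if Enters t x (-u) then 1 else 0)

lemma chi_nonneg (u : Plane) (t : Set Plane) (x : Plane) : 0 ≤ chi u t x := by
  unfold chi; split_ifs <;> norm_num

lemma chi_le_two (u : Plane) (t : Set Plane) (x : Plane) : chi u t x ≤ 2 := by
  unfold chi; split_ifs <;> norm_num

lemma one_le_chi {u : Plane} {t : Set Plane} {x : Plane}
    (h : ¬ (¬ Enters t x u ∧ ¬ Enters t x (-u))) : 1 ≤ chi u t x := by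
  unfold chi; split_ifs <;> first | (exfalso; tauto) | norm_num

/-- A tile with `n` vertices. -/
structure TileData (n : ℕ) (t : Set Plane) (S : Finset Plane) : Prop where
  hull : t = convexHull ℝ (S : Set Plane)
  card : S.card = n
  ext : ∀ v ∈ S, v ∈ Set.extremePoints ℝ t
  int : (interior t).Nonempty

lemma TileData.convex {n t S} (h : TileData n t S) : Convex ℝ t := by
  rw [h.hull]; exact convex_convexHull _ _

lemma TileData.compact {n t S} (h : TileData n t S) : IsCompact t := by
  rw [h.hull]; exact S.finite_toSet.isCompact_convexHull (𝕜 := ℝ)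

lemma TileData.one_le {n t S} (h : TileData n t S) (f : Plane →ₗ[ℝ] ℝ) (hinj : Set.InjOn f S)
    {u : Plane} (hu : ∀ y, f y = 0 → ∃ c : ℝ, y = c • u) {x : Plane} (hx : x ∈ t)
    (hxS : x ∉ S) : 1 ≤ chi u t x := by
  apply one_le_chi
  rintro ⟨h1, h2⟩
  rcases extremal_of_not_enters h.convex h.int f hu hx h1 h2 with h' | h'
  · rw [h.hull] at h' hx
    exact hxS (mem_of_minimal f hinj hx h')
  · rw [h.hull] at h' hx
    exact hxS (mem_of_maximal f hinj hx h')

open Classical in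
lemma TileData.sum_chi {n t S} (h : TileData n t S) (f : Plane →ₗ[ℝ] ℝ) (hinj : Set.InjOn f S)
    {u : Plane} (hu : ∀ y, f y = 0 → ∃ c : ℝ, y = c • u) :
    (n : ℝ) - 2 ≤ ∑ v ∈ S, chi u t v := by
  set B := S.filter (fun v => ¬ Enters t v u ∧ ¬ Enters t v (-u)) with hB
  have hSt : ∀ v ∈ S, v ∈ t := fun v hv => (h.ext v hv).1
  have hBS : B ⊆ S := Finset.filter_subset _ _
  have hBcard : B.card ≤ 2 := by
    have hsub : B ⊆ S.filter (fun v => ∀ y ∈ t, f v ≤ f y) ∪ S.filter (fun v => ∀ y ∈ t, f y ≤ f v) := by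
      intro v hv
      rw [hB, Finset.mem_filter] at hv
      rw [Finset.mem_union, Finset.mem_filter, Finset.mem_filter]
      rcases extremal_of_not_enters h.convex h.int f hu (hSt v hv.1) hv.2.1 hv.2.2 with h' | h'
      · exact Or.inl ⟨hv.1, h'⟩
      · exact Or.inr ⟨hv.1, h'⟩
    have h1 : (S.filter (fun v => ∀ y ∈ t, f v ≤ f y)).card ≤ 1 := by
      rw [Finset.card_le_one]
      intro a ha b hb
      rw [Finset.mem_filter] at ha hb
      exact hinj ha.1 hb.1 (le_antisymm (ha.2 b (hSt b hb.1)) (hb.2 a (hSt a ha.1)))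
    have h2 : (S.filter (fun v => ∀ y ∈ t, f y ≤ f v)).card ≤ 1 := by
      rw [Finset.card_le_one]
      intro a ha b hb
      rw [Finset.mem_filter] at ha hb
      exact hinj ha.1 hb.1 (le_antisymm (hb.2 a (hSt a ha.1)) (ha.2 b (hSt b hb.1)))
    have := Finset.card_le_card hsub
    have := Finset.card_union_le (S.filter (fun v => ∀ y ∈ t, f v ≤ f y))
      (S.filter (fun v => ∀ y ∈ t, f y ≤ f v))
    omega
  have hge : ∑ v ∈ S, (1 - if v ∈ B then (1:ℝ) else 0) ≤ ∑ v ∈ S, chi u t v := by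
    apply Finset.sum_le_sum
    intro v hv
    by_cases hvB : v ∈ B
    · simp only [hvB, if_true, sub_self]; exact chi_nonneg _ _ _
    · simp only [hvB, if_false, sub_zero]
      apply one_le_chi
      intro hh
      exact hvB (Finset.mem_filter.2 ⟨hv, hh⟩)
  have hsum : ∑ v ∈ S, (1 - if v ∈ B then (1:ℝ) else 0) = n - B.card := by
    rw [Finset.sum_sub_distrib, Finset.sum_ite_mem,
      Finset.inter_eq_right.2 hBS]
    simp only [Finset.sum_const, h.card, nsmul_eq_mul, mul_one]
  have : (B.card : ℝ) ≤ 2 := by exact_mod_cast hBcard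
  linarith

open Classical in
lemma sum_enters_le {A : Finset (Set Plane)}
    (hA : (A : Set (Set Plane)).Pairwise fun t s => interior t ∩ interior s = ∅) (x d : Plane) :
    ∑ t ∈ A, (if Enters t x d then (1:ℝ) else 0) ≤ 1 := by
  rw [Finset.sum_boole]
  have : (A.filter (fun t => Enters t x d)).card ≤ 1 := by
    rw [Finset.card_le_one]
    intro a ha b hb
    rw [Finset.mem_filter] at ha hb
    by_contra hab
    exact not_enters_both (hA ha.1 hb.1 hab) ha.2 hb.2
  exact_mod_cast this

lemma sum_chi_le {A : Finset (Set Plane)}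
    (hA : (A : Set (Set Plane)).Pairwise fun t s => interior t ∩ interior s = ∅) (x u : Plane) :
    ∑ t ∈ A, chi u t x ≤ 2 := by
  unfold chi
  rw [Finset.sum_add_distrib]
  have h1 := sum_enters_le hA x u
  have h2 := sum_enters_le hA x (-u)
  linarith

lemma not_extreme {t : Set Plane} {x v : Plane} (hx : x ∈ Set.extremePoints ℝ t) (hv : v ≠ 0)
    (h1 : x + v ∈ t) (h2 : x - v ∈ t) : False := by
  have : x + v = x := hx.2 h1 h2 ⟨1/2, 1/2, by norm_num, by norm_num, by norm_num, by module⟩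
  simp at this
  exact hv this

open Filter Topology in
lemma not_extreme_of_nhds {t : Set Plane} {x : Plane} (hx : x ∈ Set.extremePoints ℝ t)
    (h : t ∈ 𝓝 x) : False := by
  obtain ⟨v, hv⟩ := exists_ne (0 : Plane)
  have h1 := enters_of_interior v (mem_interior_iff_mem_nhds.2 h)
  have h2 := enters_of_interior (-v) (mem_interior_iff_mem_nhds.2 h)
  obtain ⟨e, ⟨he1, he2⟩, he⟩ := ((h1.and h2).and self_mem_nhdsWithin).exists
  refine not_extreme hx (smul_ne_zero (ne_of_gt he) hv) (interior_subset he1) ?_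
  have := interior_subset he2
  rwa [smul_neg, ← sub_eq_add_neg] at this

lemma exists_ker (f : Plane →ₗ[ℝ] ℝ) : ∃ v : Plane, v ≠ 0 ∧ f v = 0 := by
  have : ¬ Function.Injective f := by
    intro h
    have := LinearMap.finrank_le_finrank_of_injective h
    simp at this
  rw [← LinearMap.ker_eq_bot, Submodule.eq_bot_iff] at this
  push Not at this
  obtain ⟨v, hv, hv0⟩ := this
  exact ⟨v, hv0, hv⟩

open Filter Topology in
lemma not_extreme_of_two {t s : Set Plane} {x : Plane} (hx : x ∈ Set.extremePoints ℝ t)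
    (ht : Convex ℝ t) (hs : Convex ℝ s) (hit : (interior t).Nonempty) (his : (interior s).Nonempty)
    (htc : IsClosed t) (hd : interior t ∩ interior s = ∅) (h : t ∪ s ∈ 𝓝 x) : False := by
  obtain ⟨g, c, hg1, hg2⟩ := geometric_hahn_banach_open_open hs.interior isOpen_interior
    ht.interior isOpen_interior (Set.disjoint_iff_inter_eq_empty.2 (by rw [Set.inter_comm]; exact hd))
  have hs' : ∀ y ∈ s, g y ≤ c := fun y hy =>
    closure_minimal (t := {z | g z ≤ c}) (fun z hz => (hg1 z hz).le)
      (isClosed_le g.continuous continuous_const) (subset_closure_interior hs his hy)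
  have ht' : ∀ y ∈ t, c ≤ g y := fun y hy =>
    closure_minimal (t := {z | c ≤ g z}) (fun z hz => (hg2 z hz).le)
      (isClosed_le continuous_const g.continuous) (subset_closure_interior ht hit hy)
  obtain ⟨a, ha⟩ := his
  obtain ⟨b, hb⟩ := hit
  set p := b - a with hp
  have hgp : 0 < g p := by
    rw [hp, map_sub]; linarith [hg1 a ha, hg2 b hb]
  obtain ⟨v, hv0, hgv⟩ := exists_ker (g : Plane →ₗ[ℝ] ℝ)
  have hgv' : g v = 0 := hgv
  have hxc : c ≤ g x := ht' x hx.1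
  have key : ∀ w : Plane, g w = 0 → Enters (t ∪ s) x w → ∀ᶠ e : ℝ in 𝓝[>] 0, x + e • w ∈ t := by
    intro w hw hE
    filter_upwards [hE] with e he
    have hE2 := enters_of_interior p he
    have hev : ∀ᶠ e' : ℝ in 𝓝[>] 0, (x + e • w) + e' • p ∈ t := by
      filter_upwards [hE2, self_mem_nhdsWithin] with e' he' hpos
      rcases interior_subset he' with h' | h'
      · exact h'
      · exfalso
        have := hs' _ h'
        simp only [map_add, map_smul, hw, smul_eq_mul, mul_zero, add_zero] at this
        have : 0 < e' * g p := mul_pos hpos hgp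
        linarith
    have hlim : Tendsto (fun e' : ℝ => (x + e • w) + e' • p) (𝓝[>] 0) (𝓝 (x + e • w)) := by
      have : Continuous (fun e' : ℝ => (x + e • w) + e' • p) := by fun_prop
      have h0 := this.tendsto 0
      simp only [zero_smul, add_zero] at h0
      exact h0.mono_left nhdsWithin_le_nhds
    exact htc.mem_of_tendsto hlim hev
  have hxi := mem_interior_iff_mem_nhds.2 h
  have h1 := key v hgv' (enters_of_interior v hxi)
  have h2 := key (-v) (by rw [map_neg, hgv', neg_zero]) (enters_of_interior (-v) hxi)
  obtain ⟨e, ⟨he1, he2⟩, he⟩ := ((h1.and h2).and self_mem_nhdsWithin).exists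
  refine not_extreme hx (smul_ne_zero (ne_of_gt he) hv0) he1 ?_
  rwa [smul_neg, ← sub_eq_add_neg] at he2

open Classical Topology in
/-- The local inequality at a point `x`; `A` is the set of tiles containing `x`. -/
lemma local_ineq {n : ℕ} {A : Finset (Set Plane)} {VS : Set Plane → Finset Plane}
    (hT : ∀ t ∈ A, TileData n t (VS t))
    (hA : (A : Set (Set Plane)).Pairwise fun t s => interior t ∩ interior s = ∅)
    {x u : Plane} (hx : ∀ t ∈ A, x ∈ t) (hnhds : ⋃₀ (A : Set (Set Plane)) ∈ 𝓝 x)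
    (f : Plane →ₗ[ℝ] ℝ) (hinj : ∀ t ∈ A, Set.InjOn f (VS t))
    (hu : ∀ y, f y = 0 → ∃ c : ℝ, y = c • u) :
    ∑ t ∈ A with x ∈ VS t, (3 * chi u t x - 2) ≤ 0 := by
  set K := A.filter (fun t => x ∈ VS t) with hK
  set M := A.filter (fun t => ¬ x ∈ VS t) with hM
  rcases K.eq_empty_or_nonempty with hKe | ⟨t, htK⟩
  · rw [hKe]; simp
  have htA : t ∈ A := (Finset.mem_filter.1 htK).1
  have hext := (hT t htA).ext x (Finset.mem_filter.1 htK).2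
  have hcard : 3 ≤ A.card := by
    by_contra hlt
    by_cases hone : ∃ s ∈ A, s ≠ t
    · obtain ⟨s, hsA, hst⟩ := hone
      have hAeq : A = {t, s} := by
        symm
        apply Finset.eq_of_subset_of_card_le
        · intro r hr
          rw [Finset.mem_insert, Finset.mem_singleton] at hr
          rcases hr with rfl | rfl <;> assumption
        · rw [Finset.card_pair hst.symm]; omega
      refine not_extreme_of_two hext (hT t htA).convex (hT s hsA).convex (hT t htA).int
        (hT s hsA).int (hT t htA).compact.isClosed (hA htA hsA hst.symm) ?_
      rw [hAeq] at hnhds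
      simpa using hnhds
    · push Not at hone
      have hAeq : A = {t} := Finset.eq_singleton_iff_unique_mem.2 ⟨htA, hone⟩
      rw [hAeq] at hnhds
      exact not_extreme_of_nhds hext (by simpa using hnhds)
  have hsplit : ∑ t ∈ K, chi u t x + ∑ t ∈ M, chi u t x = ∑ t ∈ A, chi u t x :=
    Finset.sum_filter_add_sum_filter_not A _ _
  have hcs : K.card + M.card = A.card := Finset.card_filter_add_card_filter_not _
  have htot := sum_chi_le hA x u
  have hMge : (M.card : ℝ) ≤ ∑ t ∈ M, chi u t x := by
    have : ∑ t ∈ M, (1:ℝ) ≤ ∑ t ∈ M, chi u t x := by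
      apply Finset.sum_le_sum
      intro s hs
      rw [hM, Finset.mem_filter] at hs
      exact (hT s hs.1).one_le f (hinj s hs.1) hu (hx s hs.1) hs.2
    simpa using this
  have h0 : ∑ t ∈ K, (3 * chi u t x - 2) = 3 * ∑ t ∈ K, chi u t x - 2 * K.card := by
    rw [Finset.sum_sub_distrib, Finset.mul_sum]; simp; ring
  rw [h0]
  have hcs' : (3:ℝ) ≤ K.card + M.card := by exact_mod_cast hcs ▸ hcard
  rcases Nat.lt_or_ge M.card 2 with h2 | h2
  · have : (M.card : ℝ) ≤ 1 := by exact_mod_cast Nat.lt_succ_iff.1 h2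
    linarith
  · have : (2:ℝ) ≤ M.card := by exact_mod_cast h2
    have : (0:ℝ) ≤ K.card := by positivity
    linarith

/-! ### The global counting argument -/

lemma exists_generic (X : Finset Plane) : ∃ (f : Plane →ₗ[ℝ] ℝ) (u : Plane),
    Set.InjOn f X ∧ ∀ y, f y = 0 → ∃ c : ℝ, y = c • u := by
  classical
  obtain ⟨e, he⟩ := exists_ne (0 : Plane)
  set Y := insert 0 (insert e X) with hY
  let I := {p : Y × Y // p.1 ≠ p.2}
  obtain ⟨f, hf⟩ := Module.exists_dual_forall_apply_ne_zero (K := ℝ) (M := Plane)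
    (fun p : I => (p.1.1 : Plane) - (p.1.2 : Plane)) (by
      rintro ⟨⟨a, b⟩, hab⟩
      simp only [ne_eq, sub_eq_zero]
      exact fun h => hab (Subtype.ext h))
  have hinj : Set.InjOn f Y := by
    intro a ha b hb hab
    by_contra hne
    refine hf ⟨⟨⟨a, ha⟩, ⟨b, hb⟩⟩, fun h => hne (congrArg Subtype.val h)⟩ ?_
    simp only [map_sub, hab, sub_self]
  have hf0 : f ≠ 0 := by
    intro h
    exact he (hinj (by simp [hY]) (by simp [hY]) (by simp [h]))
  have hk := Module.Dual.finrank_ker_add_one_of_ne_zero hf0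
  have hk1 : Module.finrank ℝ (LinearMap.ker f) = 1 := by
    have : Module.finrank ℝ Plane = 2 := by simp
    omega
  obtain ⟨u, -, hu⟩ := finrank_eq_one_iff'.1 hk1
  refine ⟨f, u, hinj.mono ?_, ?_⟩
  · intro a ha
    simp only [hY, Finset.coe_insert, Set.mem_insert_iff]
    exact Or.inr (Or.inr ha)
  · intro y hy
    obtain ⟨c, hc⟩ := hu ⟨y, hy⟩
    exact ⟨c, by rw [← Submodule.coe_smul, hc]⟩

open MeasureTheory Metric

/-- Area of the unit disc. -/
def kappa : ℝ := (volume (ball (0 : Plane) 1)).toReal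

lemma kappa_pos : 0 < kappa :=
  ENNReal.toReal_pos (measure_ball_pos _ _ one_pos).ne' measure_ball_lt_top.ne

lemma volume_ball_toReal {r : ℝ} (hr : 0 ≤ r) :
    (volume (ball (0 : Plane) r)).toReal = r ^ 2 * kappa := by
  rw [Measure.addHaar_ball _ _ hr, ENNReal.toReal_mul, ENNReal.toReal_ofReal (by positivity)]
  simp [kappa]

lemma upper_count {F : Finset (Set Plane)}
    (hF : (F : Set (Set Plane)).Pairwise fun t s => interior t ∩ interior s = ∅) {a r : ℝ}
    (ha : ∀ t ∈ F, (volume (interior t)).toReal = a) (hr : 0 ≤ r) (hsub : ∀ t ∈ F, t ⊆ ball 0 r) :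
    F.card * a ≤ r ^ 2 * kappa := by
  have hfin : ∀ t ∈ F, volume (interior t) ≠ ⊤ := fun t ht =>
    ((measure_mono (interior_subset.trans (hsub t ht))).trans_lt measure_ball_lt_top).ne
  have h1 : volume (⋃ t ∈ F, interior t) = ∑ t ∈ F, volume (interior t) :=
    measure_biUnion_finset (fun t ht s hs hts => Set.disjoint_iff_inter_eq_empty.2 (hF ht hs hts))
      (fun t _ => isOpen_interior.measurableSet)
  have h2 : (volume (⋃ t ∈ F, interior t)).toReal ≤ (volume (ball (0 : Plane) r)).toReal :=
    ENNReal.toReal_mono measure_ball_lt_top.ne (measure_mono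
      (Set.iUnion₂_subset fun t ht => interior_subset.trans (hsub t ht)))
  rw [h1, ENNReal.toReal_sum hfin, Finset.sum_congr rfl ha, volume_ball_toReal hr] at h2
  simpa using h2

lemma lower_count {G : Finset (Set Plane)} {a r : ℝ}
    (ha : ∀ t ∈ G, (volume t).toReal = a) (hfin : ∀ t ∈ G, volume t ≠ ⊤) (hr : 0 ≤ r)
    (hsub : ball 0 r ⊆ ⋃ t ∈ G, t) : r ^ 2 * kappa ≤ G.card * a := by
  have h1 : volume (ball (0 : Plane) r) ≤ ∑ t ∈ G, volume t :=
    (measure_mono hsub).trans (measure_biUnion_finset_le _ _)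
  have h2 := ENNReal.toReal_mono (ENNReal.sum_ne_top.2 hfin) h1
  rw [ENNReal.toReal_sum hfin, Finset.sum_congr rfl ha, volume_ball_toReal hr] at h2
  simpa using h2

lemma finite_meeting {T : Set (Set Plane)}
    (hdis : T.Pairwise fun t s => interior t ∩ interior s = ∅) {a D : ℝ} (ha : 0 < a)
    (hvol : ∀ t ∈ T, (volume (interior t)).toReal = a)
    (hD : ∀ t ∈ T, ∀ x ∈ t, ∀ y ∈ t, dist x y < D) (R : ℝ) :
    {t ∈ T | (t ∩ ball 0 R).Nonempty}.Finite := by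
  set U := {t ∈ T | (t ∩ ball 0 R).Nonempty} with hU
  have hsub : ∀ t ∈ U, t ⊆ ball 0 (R + D) := by
    rintro t ⟨ht, y, hyt, hy⟩ x hx
    rw [mem_ball] at hy ⊢
    linarith [dist_triangle x y 0, hD t ht x hx y hyt]
  have := Measure.finite_const_le_meas_of_disjoint_iUnion (volume : Measure Plane)
    (ε := ENNReal.ofReal a) (ENNReal.ofReal_pos.2 ha) (As := fun t : U => interior t.1)
    (fun t => isOpen_interior.measurableSet)
    (fun t s hts => Set.disjoint_iff_inter_eq_empty.2
      (hdis t.2.1 s.2.1 (fun h => hts (Subtype.ext h))))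
    ((measure_mono (Set.iUnion_subset fun t : U =>
      interior_subset.trans (hsub t.1 t.2))).trans_lt measure_ball_lt_top).ne
  have huniv : {i : U | ENNReal.ofReal a ≤ volume (interior i.1)} = Set.univ := by
    ext t
    simp only [Set.mem_ofPred_eq, Set.mem_univ, iff_true]
    exact ENNReal.ofReal_le_of_le_toReal (hvol t.1 t.2.1).ge
  rw [huniv] at this
  exact Set.finite_coe_iff.1 (Set.finite_univ_iff.1 this)

/-- The tent weight. -/
def tent (R : ℝ) (x : Plane) : ℝ := max 0 (R - ‖x‖)

lemma tent_nonneg (R : ℝ) (x : Plane) : 0 ≤ tent R x := le_max_left _ _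

lemma tent_lip (R : ℝ) (x y : Plane) : |tent R x - tent R y| ≤ dist x y := by
  unfold tent
  refine (abs_max_sub_max_le_max 0 _ 0 _).trans ?_
  have : R - ‖x‖ - (R - ‖y‖) = ‖y‖ - ‖x‖ := by ring
  rw [this, sub_zero, abs_zero, max_eq_right (abs_nonneg _), dist_comm, dist_eq_norm]
  exact abs_norm_sub_norm_le _ _

open Classical Topology in
lemma no_tiling {n : ℕ} (hn : 7 ≤ n) {T : Set (Set Plane)} {VS : Set Plane → Finset Plane}
    (hT : ∀ t ∈ T, TileData n t (VS t)) (hcov : ⋃₀ T = Set.univ)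
    (hdis : T.Pairwise fun t s => interior t ∩ interior s = ∅) {a D : ℝ} (ha : 0 < a) (hDpos : 0 < D)
    (hvol : ∀ t ∈ T, (volume (interior t)).toReal = a) (hvol' : ∀ t ∈ T, (volume t).toReal = a)
    (hD : ∀ t ∈ T, ∀ x ∈ t, ∀ y ∈ t, dist x y < D) : False := by
  have hn' : (7:ℝ) ≤ n := by exact_mod_cast hn
  set k : ℝ := 72 * n + 4 with hk
  set R : ℝ := k * D with hR
  have hkpos : 0 < k := by positivity
  have hRpos : 0 < R := mul_pos hkpos hDpos
  set F := (finite_meeting hdis ha hvol hD R).toFinset with hF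
  have hmF : ∀ t, t ∈ F ↔ t ∈ T ∧ (t ∩ ball 0 R).Nonempty := by
    intro t; rw [hF, Set.Finite.mem_toFinset]; rfl
  have hFT : ∀ t ∈ F, t ∈ T := fun t ht => ((hmF t).1 ht).1
  have hFdis : (F : Set (Set Plane)).Pairwise fun t s => interior t ∩ interior s = ∅ :=
    hdis.mono hFT
  set X := F.biUnion VS with hX
  obtain ⟨f, u, hinjX, hu⟩ := exists_generic X
  have hinj : ∀ t ∈ F, Set.InjOn f (VS t) := fun t ht =>
    hinjX.mono (Finset.coe_subset.2 (Finset.subset_biUnion_of_mem VS ht))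
  -- double sum
  have hsum : ∑ t ∈ F, ∑ v ∈ VS t, tent R v * (3 * chi u t v - 2) ≤ 0 := by
    rw [Finset.sum_comm' (s' := fun x => F.filter (fun t => x ∈ VS t)) (t' := X) (by
      intro t x
      simp only [hX, Finset.mem_filter, Finset.mem_biUnion]
      constructor
      · rintro ⟨h1, h2⟩; exact ⟨⟨h1, h2⟩, t, h1, h2⟩
      · rintro ⟨h1, -⟩; exact h1)]
    apply Finset.sum_nonpos
    intro x _
    rw [← Finset.mul_sum]
    by_cases hxR : x ∈ ball (0 : Plane) R
    · refine mul_nonpos_of_nonneg_of_nonpos (tent_nonneg _ _) ?_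
      have hAF : F.filter (fun t => x ∈ t) ⊆ F := Finset.filter_subset _ _
      have hfil : F.filter (fun t => x ∈ VS t)
          = (F.filter (fun t => x ∈ t)).filter (fun t => x ∈ VS t) := by
        ext t
        simp only [Finset.mem_filter]
        constructor
        · rintro ⟨h1, h2⟩
          exact ⟨⟨h1, ((hT t (hFT t h1)).ext x h2).1⟩, h2⟩
        · rintro ⟨⟨h1, -⟩, h2⟩
          exact ⟨h1, h2⟩
      rw [hfil]
      refine local_ineq (fun t ht => hT t (hFT t (hAF ht))) (hFdis.mono (Finset.coe_subset.2 hAF))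
        (fun t ht => (Finset.mem_filter.1 ht).2) ?_ f (fun t ht => hinj t (hAF ht)) hu
      have hclosed : IsClosed (⋃ t ∈ F.filter (fun t => x ∉ t), t) := by
        apply Set.Finite.isClosed_biUnion (Finset.finite_toSet _)
        intro t ht
        exact (hT t (hFT t (Finset.mem_filter.1 ht).1)).compact.isClosed
      have hxn : x ∉ ⋃ t ∈ F.filter (fun t => x ∉ t), t := by
        simp only [Set.mem_iUnion, Finset.mem_filter, not_exists]
        rintro t ⟨-, h⟩ h'
        exact h h'
      filter_upwards [isOpen_ball.mem_nhds hxR, hclosed.isOpen_compl.mem_nhds hxn] with y hy1 hy2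
      obtain ⟨t, htT, hyt⟩ : y ∈ ⋃₀ T := hcov ▸ Set.mem_univ y
      have htF : t ∈ F := (hmF t).2 ⟨htT, y, hyt, hy1⟩
      refine ⟨t, ?_, hyt⟩
      by_contra hxt
      apply hy2
      simp only [Set.mem_iUnion]
      refine ⟨t, Finset.mem_filter.2 ⟨htF, fun h => hxt ?_⟩, hyt⟩
      exact Finset.mem_coe.2 (Finset.mem_filter.2 ⟨htF, h⟩)
    · have : tent R x = 0 := by
        rw [mem_ball, dist_zero_right, not_lt] at hxR
        exact max_eq_left (by linarith)
      rw [this, zero_mul]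
  -- per tile
  have htile : ∀ t ∈ F, ∀ p ∈ t, tent R p - 4 * n * D ≤
      ∑ v ∈ VS t, tent R v * (3 * chi u t v - 2) := by
    intro t ht p hp
    have hd := hT t (hFT t ht)
    have h1 : ∑ v ∈ VS t, (tent R p * (3 * chi u t v - 2) - 4 * D) ≤
        ∑ v ∈ VS t, tent R v * (3 * chi u t v - 2) := by
      apply Finset.sum_le_sum
      intro v hv
      have hlip := (tent_lip R v p).trans (hD t (hFT t ht) v (hd.ext v hv).1 p hp).le
      have hc0 := chi_nonneg u t v
      have hc2 := chi_le_two u t v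
      have hab : |(tent R v - tent R p) * (3 * chi u t v - 2)| ≤ D * 4 := by
        rw [abs_mul]
        apply mul_le_mul hlip _ (abs_nonneg _) hDpos.le
        rw [abs_le]; constructor <;> linarith
      have := (abs_le.1 hab).1
      linarith
    have h2 : ∑ v ∈ VS t, (tent R p * (3 * chi u t v - 2) - 4 * D)
        = tent R p * (3 * ∑ v ∈ VS t, chi u t v - 2 * n) - 4 * n * D := by
      rw [Finset.sum_sub_distrib, ← Finset.mul_sum, Finset.sum_sub_distrib, ← Finset.mul_sum]
      simp only [Finset.sum_const, hd.card, nsmul_eq_mul]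
      ring
    have h3 := hd.sum_chi f (hinj t ht) hu
    have h4 : tent R p * 1 ≤ tent R p * (3 * ∑ v ∈ VS t, chi u t v - 2 * n) :=
      mul_le_mul_of_nonneg_left (by linarith) (tent_nonneg _ _)
    linarith
  -- tiles meeting the half ball
  set G := F.filter (fun t => (t ∩ ball 0 (R / 2)).Nonempty) with hG
  have hfinT : ∀ t ∈ T, volume t ≠ ⊤ := fun t ht => (hT t ht).compact.measure_lt_top.ne
  have hGlow : (R / 2) ^ 2 * kappa ≤ G.card * a := by
    apply lower_count
    · intro t ht; exact hvol' t (hFT t (Finset.mem_filter.1 ht).1)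
    · intro t ht; exact hfinT t (hFT t (Finset.mem_filter.1 ht).1)
    · positivity
    · intro y hy
      obtain ⟨t, htT, hyt⟩ : y ∈ ⋃₀ T := hcov ▸ Set.mem_univ y
      have hyR : y ∈ ball (0:Plane) R := ball_subset_ball (by linarith) hy
      simp only [Set.mem_iUnion]
      exact ⟨t, Finset.mem_filter.2 ⟨(hmF t).2 ⟨htT, y, hyt, hyR⟩, y, hyt, hy⟩, hyt⟩
  have hFup : F.card * a ≤ (R + D) ^ 2 * kappa := by
    apply upper_count hFdis
    · intro t ht; exact hvol t (hFT t ht)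
    · positivity
    · intro t ht x hx
      obtain ⟨htT, y, hyt, hy⟩ := (hmF t).1 ht
      rw [mem_ball] at hy ⊢
      linarith [dist_triangle x y 0, hD t htT x hx y hyt]
  have hlow : (G.card : ℝ) * (R / 2) - F.card * (4 * n * D) ≤ 0 := by
    refine le_trans ?_ hsum
    have : ∑ t ∈ F, ((if (t ∩ ball 0 (R / 2)).Nonempty then R / 2 else 0) - 4 * n * D) ≤
        ∑ t ∈ F, ∑ v ∈ VS t, tent R v * (3 * chi u t v - 2) := by
      apply Finset.sum_le_sum
      intro t ht
      by_cases hh : (t ∩ ball 0 (R / 2)).Nonempty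
      · obtain ⟨p, hpt, hp⟩ := id hh
        rw [if_pos hh]
        refine le_trans ?_ (htile t ht p hpt)
        rw [mem_ball, dist_zero_right] at hp
        have : R - ‖p‖ ≤ tent R p := le_max_right _ _
        linarith
      · rw [if_neg hh]
        obtain ⟨p, hpt, -⟩ := ((hmF t).1 ht).2
        have := htile t ht p hpt
        have := tent_nonneg R p
        linarith
    refine le_trans (le_of_eq ?_) this
    rw [Finset.sum_sub_distrib, ← Finset.sum_filter]
    simp [hG]
  have hkap := kappa_pos
  -- final arithmetic
  have e1 : (R / 2) ^ 2 * kappa * (R / 2) ≤ G.card * a * (R / 2) :=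
    mul_le_mul_of_nonneg_right hGlow (by positivity)
  have e2 : F.card * a * (4 * n * D) ≤ (R + D) ^ 2 * kappa * (4 * n * D) :=
    mul_le_mul_of_nonneg_right hFup (by positivity)
  have e3 : (G.card : ℝ) * a * (R / 2) ≤ F.card * a * (4 * n * D) := by
    have := mul_le_mul_of_nonneg_left hlow ha.le
    linarith
  have e4 : (R / 2) ^ 2 * kappa * (R / 2) ≤ (R + D) ^ 2 * kappa * (4 * n * D) := by linarith
  have e5 : (kappa * D ^ 3) * (k ^ 3) ≤ (kappa * D ^ 3) * (32 * n * (k + 1) ^ 2) := by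
    rw [hR] at e4
    linarith
  have e6 : k ^ 3 ≤ 32 * n * (k + 1) ^ 2 := le_of_mul_le_mul_left e5 (by positivity)
  have e7 : (k + 1) ^ 2 ≤ (9 / 4) * k ^ 2 := by nlinarith
  have e8 : k * k ^ 2 ≤ (72 * n) * k ^ 2 := by nlinarith
  have e9 : k ≤ 72 * n := le_of_mul_le_mul_right e8 (by positivity)
  linarith

/-! ### From polygons to tile data -/

lemma polygon_injective {n : ℕ} {V : Fin n → Plane}
    (hV : ∀ i, V i ∉ convexHull ℝ (V '' {j | j ≠ i})) : Function.Injective V := by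
  intro i j hij
  by_contra hne
  exact hV i (subset_convexHull ℝ _ ⟨j, fun h => hne h.symm, hij.symm⟩)

lemma polygon_extreme {n : ℕ} {V : Fin n → Plane}
    (hV : ∀ i, V i ∉ convexHull ℝ (V '' {j | j ≠ i})) (i : Fin n) :
    V i ∈ Set.extremePoints ℝ (convexHull ℝ (Set.range V)) := by
  by_contra hi
  have hcomp : IsCompact (convexHull ℝ (Set.range V)) :=
    (Set.finite_range V).isCompact_convexHull (𝕜 := ℝ)
  have hKM := closure_convexHull_extremePoints hcomp (convex_convexHull ℝ _)
  have hsub : Set.extremePoints ℝ (convexHull ℝ (Set.range V)) ⊆ V '' {j | j ≠ i} := by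
    intro x hx
    obtain ⟨j, rfl⟩ := extremePoints_convexHull_subset hx
    refine ⟨j, ?_, rfl⟩
    rintro rfl
    exact hi hx
  have hcl : IsClosed (convexHull ℝ (V '' {j | j ≠ i})) :=
    ((Set.toFinite _).isCompact_convexHull (𝕜 := ℝ)).isClosed
  have h1 : closure (convexHull ℝ (Set.extremePoints ℝ (convexHull ℝ (Set.range V)))) ⊆
      convexHull ℝ (V '' {j | j ≠ i}) := closure_minimal (convexHull_mono hsub) hcl
  rw [hKM] at h1
  exact hV i (h1 (subset_convexHull ℝ _ ⟨i, rfl⟩))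

lemma polygon_interior {n : ℕ} (hn : 7 ≤ n) {V : Fin n → Plane}
    (hV : ∀ i, V i ∉ convexHull ℝ (V '' {j | j ≠ i})) :
    (interior (convexHull ℝ (Set.range V))).Nonempty := by
  let i0 : Fin n := ⟨0, by omega⟩
  let i1 : Fin n := ⟨1, by omega⟩
  let i2 : Fin n := ⟨2, by omega⟩
  have h01 : i0 ≠ i1 := by simp [i0, i1]
  have h02 : i0 ≠ i2 := by simp [i0, i2]
  have h12 : i1 ≠ i2 := by simp [i1, i2]
  rw [interior_convexHull_nonempty_iff_affineSpan_eq_top]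
  have hno : ∀ i j k : Fin n, i ≠ j → k ≠ j → ¬ Wbtw ℝ (V i) (V j) (V k) := by
    intro i j k hij hkj h
    apply hV j
    have hi : V i ∈ V '' {l | l ≠ j} := ⟨i, hij, rfl⟩
    have hk : V k ∈ V '' {l | l ≠ j} := ⟨k, hkj, rfl⟩
    exact (convex_convexHull ℝ _).segment_subset (subset_convexHull ℝ _ hi)
      (subset_convexHull ℝ _ hk) (mem_segment_iff_wbtw.2 h)
  have hncol : ¬ Collinear ℝ (Set.range V) := by
    intro h
    have h3 : Collinear ℝ ({V i0, V i1, V i2} : Set Plane) := by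
      apply h.subset
      rintro x (rfl | rfl | rfl) <;> exact ⟨_, rfl⟩
    rcases h3.wbtw_or_wbtw_or_wbtw with h | h | h
    · exact hno _ _ _ h01 h12.symm h
    · exact hno _ _ _ h12 h02 h
    · exact hno _ _ _ h02.symm h01.symm h
  rw [collinear_iff_finrank_le_one, not_le] at hncol
  have hne : (Set.range V).Nonempty := ⟨V i0, i0, rfl⟩
  rw [AffineSubspace.affineSpan_eq_top_iff_vectorSpan_eq_top_of_nonempty ℝ _ _ hne]
  apply Submodule.eq_top_of_finrank_eq
  have := Submodule.finrank_le (vectorSpan ℝ (Set.range V))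
  have h2 : Module.finrank ℝ Plane = 2 := by simp
  omega

lemma polygon_tileData {n : ℕ} (hn : 7 ≤ n) {V : Fin n → Plane}
    (hV : ∀ i, V i ∉ convexHull ℝ (V '' {j | j ≠ i})) :
    ∃ S : Finset Plane, TileData n (convexHull ℝ (Set.range V)) S := by
  classical
  refine ⟨Finset.univ.image V, by simp, ?_, ?_, polygon_interior hn hV⟩
  · rw [Finset.card_image_of_injective _ (polygon_injective hV)]; simp
  · intro v hv
    obtain ⟨i, -, rfl⟩ := Finset.mem_image.1 hv
    exact polygon_extreme hV i

lemma image_convexHull_isometry (g : Plane ≃ᵢ Plane) (s : Set Plane) :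
    g '' convexHull ℝ s = convexHull ℝ (g '' s) :=
  AffineMap.image_convexHull (g.toRealAffineIsometryEquiv.toAffineEquiv : Plane →ᵃ[ℝ] Plane) s

lemma volume_image_isometry (g : Plane ≃ᵢ Plane) (s : Set Plane) :
    volume (g '' s) = volume s := by
  set G := g.toRealAffineIsometryEquiv
  set L := G.linearIsometryEquiv
  have hg : ∀ x, g x = g 0 + L x := by
    intro x
    have := G.map_vadd 0 x
    simp only [vadd_eq_add, add_zero] at this
    rw [add_comm]
    exact this
  have : g '' s = (fun x => g 0 + x) '' (L '' s) := by
    rw [Set.image_image]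
    exact Set.image_congr fun x _ => hg x
  rw [this, Set.image_add_left, measure_preimage_add]
  have h2 : L '' s = L.symm ⁻¹' s := L.toEquiv.image_eq_preimage_symm s
  rw [h2]
  exact (L.symm.measurePreserving).measure_preimage_emb
    L.symm.toHomeomorph.measurableEmbedding s

/-- no convex polygon with at least seven vertices admits a
monohedral tiling of the Euclidean plane. -/
theorem statement_19 {n : ℕ} [NeZero n] (hn : 7 ≤ n) (P : ConvexPolygon n) :
    ¬ ∃ T : Set (Set Plane), IsMonohedralTiling P.carrier T := by
  rintro ⟨T, hcopy, hcov, hdis⟩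
  have hdata : ∀ t, ∃ S : Finset Plane, t ∈ T → TileData n t S := by
    intro t
    by_cases ht : t ∈ T
    · obtain ⟨g, rfl⟩ := hcopy t ht
      have hV' : ∀ i, (g ∘ P.V) i ∉ convexHull ℝ ((g ∘ P.V) '' {j | j ≠ i}) := by
        intro i hi
        rw [Set.image_comp, ← image_convexHull_isometry] at hi
        obtain ⟨y, hy, hyi⟩ := hi
        rw [g.injective hyi] at hy
        exact P.strictlyConvex i hy
      obtain ⟨S, hS⟩ := polygon_tileData hn hV'
      rw [Set.range_comp, ← image_convexHull_isometry] at hS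
      exact ⟨S, fun _ => hS⟩
    · exact ⟨∅, fun h => absurd h ht⟩
  choose VS hVS using hdata
  obtain ⟨S0, h0⟩ := polygon_tileData hn P.strictlyConvex
  have h0' : TileData n P.carrier S0 := h0
  have hpos : 0 < (volume (interior P.carrier)).toReal :=
    ENNReal.toReal_pos (isOpen_interior.measure_pos _ h0'.int).ne'
      ((measure_mono interior_subset).trans_lt h0'.compact.measure_lt_top).ne
  have hb := h0'.compact.isBounded
  refine no_tiling hn hVS hcov hdis hpos
    (D := Metric.diam P.carrier + 1) (by linarith [Metric.diam_nonneg (s := P.carrier)]) ?_ ?_ ?_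
  · intro t ht
    obtain ⟨g, rfl⟩ := hcopy t ht
    have : interior (g '' P.carrier) = g '' interior P.carrier :=
      (g.toHomeomorph.image_interior P.carrier).symm
    rw [this, volume_image_isometry]
  · intro t ht
    obtain ⟨g, rfl⟩ := hcopy t ht
    rw [volume_image_isometry]
    congr 1
    exact (measure_congr (interior_ae_eq_of_null_frontier
      (h0'.convex.addHaar_frontier volume))).symm
  · intro t ht x hx y hy
    obtain ⟨g, rfl⟩ := hcopy t ht
    obtain ⟨x, hx, rfl⟩ := hx
    obtain ⟨y, hy, rfl⟩ := hy
    rw [g.dist_eq]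
    linarith [Metric.dist_le_diam_of_mem hb hx hy]
end
end
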